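/- arXiv:1712.01167 — 2 statements merged into one kernel-verified Lean document; each statement's English description precedes it below -/
import Mathlib

section
/- Let F be a nonzero homogeneous polynomial of degree 3 in k[x₀,x₁,x₂,x₃] such that the cubic surface V(F) is smooth. Then the stabilizer of V(F) in PGL₄(k), i.e., the image in PGL₄(k) of the subgroup {A ∈ GL₄(k) : A leaves V(F) invariant} of GL₄(k), is a finite group of cardinality at most 25920. -/
open MvPolynomial Matrix

/-- The polynomial `F(A·x)`, obtained from `F` by substituting
`xᵢ ↦ ∑ⱼ Aᵢⱼ xⱼ`. -/
noncomputable def substMatrix {k : Type*} [Field k] (A : Matrix (Fin 4) (Fin 4) k)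
    (F : MvPolynomial (Fin 4) k) : MvPolynomial (Fin 4) k :=
  aeval (fun i => ∑ j, C (A i j) * X j) F

/-- A matrix `A` leaves the cubic surface `V(F)` invariant if `F(A·x) = λ·F(x)`
for some `λ ∈ kˣ`. -/
def LeavesInvariant {k : Type*} [Field k] (A : Matrix (Fin 4) (Fin 4) k)
    (F : MvPolynomial (Fin 4) k) : Prop :=
  ∃ lam : kˣ, substMatrix A F = (lam : k) • F

/-- The subgroup of scalar matrices in `GL₄(k)`; `PGL₄(k)` is the quotient
of `GL₄(k)` by this subgroup. -/
def scalarSubgroup (k : Type*) [Field k] : Subgroup (GL (Fin 4) k) :=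
  (Units.map (algebraMap k (Matrix (Fin 4) (Fin 4) k)).toMonoidHom).range


namespace CubicSurf

section Basic
variable {k V : Type*} [Field k] [AddCommGroup V] [Module k V]

/-- the cubic form attached to a trilinear form -/
def ff (T : V →ₗ[k] V →ₗ[k] V →ₗ[k] k) (x : V) : k := T x x x

/-- the polarization quadratic in the first, linear in the second argument -/
def DD (T : V →ₗ[k] V →ₗ[k] V →ₗ[k] k) (p w : V) : k := T w p p + T p w p + T p p w

/-- the full polarization -/
def EE (T : V →ₗ[k] V →ₗ[k] V →ₗ[k] k) (p q w : V) : k :=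
  T p q w + T q p w + T p w q + T q w p + T w p q + T w q p

variable (T : V →ₗ[k] V →ₗ[k] V →ₗ[k] k)

lemma ff_add (x y : V) : ff T (x + y) = ff T x + DD T x y + DD T y x + ff T y := by
  simp only [ff, DD, map_add, LinearMap.add_apply]; ring

lemma ff_smul (c : k) (x : V) : ff T (c • x) = c ^ 3 * ff T x := by
  simp only [ff, map_smul, LinearMap.smul_apply, smul_eq_mul]; ring

lemma DD_add_left (p q w : V) : DD T (p + q) w = DD T p w + DD T q w + EE T p q w := by
  simp only [DD, EE, map_add, LinearMap.add_apply]; ring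

lemma DD_add_right (p q w : V) : DD T p (q + w) = DD T p q + DD T p w := by
  simp only [DD, map_add, LinearMap.add_apply]; ring

lemma DD_smul_left (c : k) (p w : V) : DD T (c • p) w = c ^ 2 * DD T p w := by
  simp only [DD, map_smul, LinearMap.smul_apply, smul_eq_mul]; ring

lemma DD_smul_right (c : k) (p w : V) : DD T p (c • w) = c * DD T p w := by
  simp only [DD, map_smul, LinearMap.smul_apply, smul_eq_mul]; ring

lemma DD_self (p : V) : DD T p p = 3 * ff T p := by
  simp only [DD, ff]; ring

lemma EE_add_left (p q r w : V) : EE T (p + q) r w = EE T p r w + EE T q r w := by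
  simp only [EE, map_add, LinearMap.add_apply]; ring

lemma EE_add_mid (p q r w : V) : EE T r (p + q) w = EE T r p w + EE T r q w := by
  simp only [EE, map_add, LinearMap.add_apply]; ring

lemma EE_add_right (p q r w : V) : EE T r w (p + q) = EE T r w p + EE T r w q := by
  simp only [EE, map_add, LinearMap.add_apply]; ring

lemma EE_smul_left (c : k) (p q r : V) : EE T (c • p) q r = c * EE T p q r := by
  simp only [EE, map_smul, LinearMap.smul_apply, smul_eq_mul]; ring

lemma EE_smul_mid (c : k) (p q r : V) : EE T p (c • q) r = c * EE T p q r := by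
  simp only [EE, map_smul, LinearMap.smul_apply, smul_eq_mul]; ring

lemma EE_smul_right (c : k) (p q r : V) : EE T p q (c • r) = c * EE T p q r := by
  simp only [EE, map_smul, LinearMap.smul_apply, smul_eq_mul]; ring

lemma EE_swap (p q r : V) : EE T p q r = EE T q p r := by
  simp only [EE]; ring

lemma EE_swap' (p q r : V) : EE T p q r = EE T p r q := by
  simp only [EE]; ring

lemma EE_self (p r : V) : EE T p p r = 2 * DD T p r := by
  simp only [EE, DD]; ring

/-- smoothness -/
def Smooth : Prop := ∀ p : V, ff T p = 0 → (∀ w, DD T p w = 0) → p = 0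

/-- lines on the surface, as 2-dimensional subspaces -/
def IsLine (L : Submodule k V) : Prop := Module.finrank k L = 2 ∧ ∀ x ∈ L, ff T x = 0

/-- adapted bases -/
structure Adapted (L : Submodule k V) (b0 b1 z0 z1 : V) : Prop where
  mem0 : b0 ∈ L
  mem1 : b1 ∈ L
  spanL : ∀ x ∈ L, ∃ u v : k, x = u • b0 + v • b1
  indep : ∀ u v s t : k, u • b0 + v • b1 + s • z0 + t • z1 = 0 → u = 0 ∧ v = 0 ∧ s = 0 ∧ t = 0
  span : ∀ x : V, ∃ u v s t : k, x = u • b0 + v • b1 + s • z0 + t • z1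

/-- half-discriminant of a ternary quadratic form -/
def disc (A B C D E G : k) : k :=
  4 * A * C * G + B * D * E - A * E ^ 2 - C * D ^ 2 - G * B ^ 2

/-- discriminant of the residual conic in the plane spanned by `b0`, `b1`, `z`. -/
def Delta (b0 b1 z : V) : k :=
  disc (DD T b0 z) (EE T b0 b1 z) (DD T b1 z) (DD T z b0) (DD T z b1) (ff T z)

variable {T}

lemma quad_zero [Infinite k] {a b c : k} (h : ∀ t : k, a + b * t + c * t ^ 2 = 0) :
    a = 0 ∧ b = 0 ∧ c = 0 := by
  classical
  have h0 : a = 0 := by simpa using h 0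
  obtain ⟨r, hr⟩ := Infinite.exists_notMem_finset ({0, 1} : Finset k)
  simp only [Finset.mem_insert, Finset.mem_singleton, not_or] at hr
  have h1 := h 1
  have h2 := h r
  subst h0
  have hc : c * (r * (r - 1)) = 0 := by linear_combination h2 - r * h1
  have : c = 0 := by
    rcases mul_eq_zero.1 hc with h | h
    · exact h
    · exact absurd h (mul_ne_zero hr.1 (sub_ne_zero.2 hr.2))
  subst this
  refine ⟨rfl, ?_, rfl⟩
  linear_combination h1

lemma IsLine.DD_eq [Infinite k] {L : Submodule k V} (hL : IsLine T L) {x y : V} (hx : x ∈ L)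
    (hy : y ∈ L) : DD T x y = 0 := by
  have := quad_zero (a := 0) (b := DD T x y) (c := DD T y x) (fun t => by
    have h := hL.2 (x + t • y) (L.add_mem hx (L.smul_mem t hy))
    rw [ff_add, hL.2 x hx, ff_smul, hL.2 y hy, DD_smul_left, DD_smul_right] at h
    linear_combination h)
  exact this.2.1

lemma binquad [IsAlgClosed k] (a b c : k) : ∃ x y : k, (x ≠ 0 ∨ y ≠ 0) ∧
    a * x ^ 2 + b * x * y + c * y ^ 2 = 0 := by
  by_cases ha : a = 0
  · exact ⟨1, 0, Or.inl one_ne_zero, by simp [ha]⟩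
  · obtain ⟨x, hx⟩ := IsAlgClosed.exists_root
      (Polynomial.C a * Polynomial.X ^ 2 + Polynomial.C b * Polynomial.X + Polynomial.C c)
      (by rw [Polynomial.degree_quadratic ha]; norm_num)
    refine ⟨x, 1, Or.inr one_ne_zero, ?_⟩
    simp [Polynomial.IsRoot] at hx
    linear_combination hx

lemma monic_roots [IsAlgClosed k] (b c : k) : ∃ x y : k, x + y = b ∧ x * y = c := by
  obtain ⟨x, hx⟩ := IsAlgClosed.exists_root
      (Polynomial.C 1 * Polynomial.X ^ 2 + Polynomial.C (-b) * Polynomial.X + Polynomial.C c)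
      (by rw [Polynomial.degree_quadratic one_ne_zero]; norm_num)
  refine ⟨x, b - x, by ring, ?_⟩
  simp [Polynomial.IsRoot] at hx
  linear_combination -hx

/-- a ternary quadratic form of vanishing discriminant splits -/
def Splits3 (A B C D E G : k) : Prop := ∃ α β γ α' β' γ' : k, A = α * α' ∧ B = α * β' + β * α' ∧
  C = β * β' ∧ D = α * γ' + γ * α' ∧ E = β * γ' + γ * β' ∧ G = γ * γ'

lemma splits_aux [IsAlgClosed k] {A B C D E G : k} (hA : A ≠ 0) (h : disc A B C D E G = 0) :
    Splits3 A B C D E G := by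
  obtain ⟨β, β', hB, hC⟩ := monic_roots (B / A) (C / A)
  obtain ⟨γ, γ', hD, hG⟩ := monic_roots (D / A) (G / A)
  have hB' : B = A * (β + β') := by rw [hB]; field_simp
  have hC' : C = A * (β * β') := by rw [hC]; field_simp
  have hD' : D = A * (γ + γ') := by rw [hD]; field_simp
  have hG' : G = A * (γ * γ') := by rw [hG]; field_simp
  have key : A * ((E - A * (β * γ' + γ * β')) * (E - A * (β * γ + γ' * β'))) = 0 := by
    rw [disc, hB', hC', hD', hG'] at h
    linear_combination -h
  rcases mul_eq_zero.1 ((mul_eq_zero.1 key).resolve_left hA) with h1 | h1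
  · exact ⟨A, A * β, A * γ, 1, β', γ', by ring, by rw [hB']; ring, by rw [hC']; ring,
      by rw [hD']; ring, by linear_combination h1, by rw [hG']; ring⟩
  · exact ⟨A, A * β, A * γ', 1, β', γ, by ring, by rw [hB']; ring, by rw [hC']; ring,
      by rw [hD']; ring, by linear_combination h1, by rw [hG']; ring⟩

lemma splits [IsAlgClosed k] {A B C D E G : k} (h : disc A B C D E G = 0) :
    Splits3 A B C D E G := by
  by_cases hA : A = 0
  · by_cases hC : C = 0
    · by_cases hG : G = 0
      · subst hA hC hG
        have : B * D * E = 0 := by rw [disc] at h; linear_combination h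
        rcases mul_eq_zero.1 this with h | h
        · rcases mul_eq_zero.1 h with h | h
          · exact ⟨0, 0, 1, D, E, 0, by simp [h]⟩
          · exact ⟨0, 1, 0, B, 0, E, by simp [h]⟩
        · exact ⟨1, 0, 0, 0, B, D, by simp [h]⟩
      · obtain ⟨γ, β, α, γ', β', α', h1, h2, h3, h4, h5, h6⟩ :=
          splits_aux (A := G) (B := E) (C := C) (D := D) (E := B) (G := A) hG
            (by rw [disc] at *; linear_combination h)
        exact ⟨α, β, γ, α', β', γ', h6, by rw [h5]; ring, h3, by rw [h4]; ring, by rw [h2]; ring, h1⟩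
    · obtain ⟨β, α, γ, β', α', γ', h1, h2, h3, h4, h5, h6⟩ :=
          splits_aux (A := C) (B := B) (C := A) (D := E) (E := D) (G := G) hC
            (by rw [disc] at *; linear_combination h)
      exact ⟨α, β, γ, α', β', γ', h3, by rw [h2]; ring, h1, h5, h4, h6⟩
  · exact splits_aux hA h

/-- a line and a conic in the plane meet -/
lemma line_conic [IsAlgClosed k] (α β γ A B C D E G : k) : ∃ u v s : k,
    (u ≠ 0 ∨ v ≠ 0 ∨ s ≠ 0) ∧ α * u + β * v + γ * s = 0 ∧
    A * u ^ 2 + B * u * v + C * v ^ 2 + D * u * s + E * v * s + G * s ^ 2 = 0 := by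
  by_cases hα : α = 0
  · by_cases hβ : β = 0
    · by_cases hγ : γ = 0
      · obtain ⟨x, y, hxy, h⟩ := binquad A B C
        refine ⟨x, y, 0, by tauto, by simp [hα, hβ], by linear_combination h⟩
      · obtain ⟨x, y, hxy, h⟩ := binquad A B C
        exact ⟨x, y, 0, by tauto, by simp [hα, hβ], by linear_combination h⟩
    · obtain ⟨x, y, hxy, h⟩ := binquad (A * β ^ 2) (-B * γ * β + D * β ^ 2)
        (C * γ ^ 2 - E * γ * β + G * β ^ 2)
      refine ⟨β * x, -γ * y, β * y, ?_, by rw [hα]; ring, by linear_combination h⟩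
      rcases hxy with h | h
      · exact Or.inl (mul_ne_zero hβ h)
      · exact Or.inr (Or.inr (mul_ne_zero hβ h))
  · obtain ⟨x, y, hxy, h⟩ := binquad (A * β ^ 2 - B * β * α + C * α ^ 2)
        (2 * A * β * γ - B * γ * α - D * β * α + E * α ^ 2) (A * γ ^ 2 - D * γ * α + G * α ^ 2)
    refine ⟨-β * x - γ * y, α * x, α * y, ?_, by ring, by linear_combination h⟩
    rcases hxy with h | h
    · exact Or.inr (Or.inl (mul_ne_zero hα h))
    · exact Or.inr (Or.inr (mul_ne_zero hα h))

end Basic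
end CubicSurf


namespace CubicSurf

set_option linter.unusedSectionVars false
set_option linter.unusedSimpArgs false

section Planes
variable {k V : Type*} [Field k] [IsAlgClosed k] [AddCommGroup V] [Module k V]
variable {T : V →ₗ[k] V →ₗ[k] V →ₗ[k] k} {L : Submodule k V} {b0 b1 z0 z1 : V}

lemma ff_plane (hL : IsLine T L) (h : Adapted L b0 b1 z0 z1) (u v s : k) :
    ff T (u • b0 + v • b1 + s • z0) = s * (DD T b0 z0 * u ^ 2 + EE T b0 b1 z0 * u * v
      + DD T b1 z0 * v ^ 2 + DD T z0 b0 * u * s + DD T z0 b1 * v * s + ff T z0 * s ^ 2) := by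
  have hl : u • b0 + v • b1 ∈ L := L.add_mem (L.smul_mem _ h.mem0) (L.smul_mem _ h.mem1)
  rw [ff_add, hL.2 _ hl]
  simp only [DD_add_left, DD_add_right, DD_smul_left, DD_smul_right, EE_smul_left, EE_smul_mid,
    EE_smul_right, ff_smul]
  ring

lemma DD_plane (u v s : k) (w : V) :
    DD T (u • b0 + v • b1 + s • z0) w = u ^ 2 * DD T b0 w + u * v * EE T b0 b1 w + v ^ 2 * DD T b1 w
      + u * s * EE T b0 z0 w + v * s * EE T b1 z0 w + s ^ 2 * DD T z0 w := by
  simp only [DD_add_left, DD_smul_left, EE_add_left, EE_smul_left, EE_smul_mid]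
  ring

lemma DD_plane_b0 (hL : IsLine T L) (h : Adapted L b0 b1 z0 z1) (u v s : k) :
    DD T (u • b0 + v • b1 + s • z0) b0 = s * (2 * DD T b0 z0 * u + EE T b0 b1 z0 * v
      + DD T z0 b0 * s) := by
  rw [DD_plane, hL.DD_eq h.mem0 h.mem0, hL.DD_eq h.mem1 h.mem0, EE_swap' T b0 b1 b0, EE_self,
    hL.DD_eq h.mem0 h.mem1, EE_swap' T b0 z0 b0, EE_self, EE_swap' T b1 z0 b0, EE_swap T b1 b0 z0]
  ring

lemma DD_plane_b1 (hL : IsLine T L) (h : Adapted L b0 b1 z0 z1) (u v s : k) :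
    DD T (u • b0 + v • b1 + s • z0) b1 = s * (2 * DD T b1 z0 * v + EE T b0 b1 z0 * u
      + DD T z0 b1 * s) := by
  rw [DD_plane, hL.DD_eq h.mem0 h.mem1, hL.DD_eq h.mem1 h.mem1, EE_swap T b0 b1 b1,
    EE_swap' T b1 b0 b1, EE_self,
    hL.DD_eq h.mem1 h.mem0, EE_swap' T b1 z0 b1, EE_self, EE_swap' T b0 z0 b1]
  ring

lemma DD_plane_z0 (u v s : k) :
    DD T (u • b0 + v • b1 + s • z0) z0 = u ^ 2 * DD T b0 z0 + u * v * EE T b0 b1 z0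
      + v ^ 2 * DD T b1 z0
      + 2 * u * s * DD T z0 b0 + 2 * v * s * DD T z0 b1 + 3 * s ^ 2 * ff T z0 := by
  rw [DD_plane, EE_swap T b0 z0 z0, EE_swap' T z0 b0 z0, EE_self, EE_swap T b1 z0 z0,
    EE_swap' T z0 b1 z0, EE_self, DD_self]
  ring

/-- a singular point in the plane -/
lemma sing_plane (hT : Smooth T) (h : Adapted L b0 b1 z0 z1) (u v s : k)
    (hne : u ≠ 0 ∨ v ≠ 0 ∨ s ≠ 0)
    (h0 : DD T (u • b0 + v • b1 + s • z0) b0 = 0) (h1 : DD T (u • b0 + v • b1 + s • z0) b1 = 0)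
    (h2 : DD T (u • b0 + v • b1 + s • z0) z0 = 0) (h3 : DD T (u • b0 + v • b1 + s • z0) z1 = 0)
    (hf : ff T (u • b0 + v • b1 + s • z0) = 0) : False := by
  have hp := hT _ hf (fun w => by
    obtain ⟨a, b, c, d, rfl⟩ := h.span w
    rw [DD_add_right, DD_add_right, DD_add_right, DD_smul_right, DD_smul_right, DD_smul_right,
      DD_smul_right, h0, h1, h2, h3]
    ring)
  obtain ⟨a, b, c, -⟩ := h.indep u v s 0 (by rw [hp]; simp)
  tauto

/-- along no line of the plane are all the partials vanishing -/
lemma no_double (hT : Smooth T) (h : Adapted L b0 b1 z0 z1) (α β γ : k)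
    (H : ∀ u v s : k, α * u + β * v + γ * s = 0 →
      DD T (u • b0 + v • b1 + s • z0) b0 = 0 ∧ DD T (u • b0 + v • b1 + s • z0) b1 = 0 ∧
      DD T (u • b0 + v • b1 + s • z0) z0 = 0 ∧ ff T (u • b0 + v • b1 + s • z0) = 0) : False := by
  obtain ⟨u, v, s, hne, hl, hq⟩ := line_conic α β γ (DD T b0 z1) (EE T b0 b1 z1) (DD T b1 z1)
    (EE T b0 z0 z1) (EE T b1 z0 z1) (DD T z0 z1)
  obtain ⟨h0, h1, h2, hf⟩ := H u v s hl
  exact sing_plane hT h u v s hne h0 h1 h2 (by rw [DD_plane]; linear_combination hq) hf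

lemma not_prop_s (hT : Smooth T) (hL : IsLine T L) (h : Adapted L b0 b1 z0 z1)
    {α β α' β' : k} (hA : DD T b0 z0 = α * α') (hB : EE T b0 b1 z0 = α * β' + β * α')
    (hC : DD T b1 z0 = β * β') : α ≠ 0 ∨ β ≠ 0 := by
  by_contra hcon
  push Not at hcon
  obtain ⟨rfl, rfl⟩ := hcon
  refine no_double hT h 0 0 1 (fun u v s hs => ?_)
  have hs : s = 0 := by linear_combination hs
  subst hs
  refine ⟨?_, ?_, ?_, ?_⟩
  · rw [DD_plane_b0 hL h]; ring
  · rw [DD_plane_b1 hL h]; ring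
  · rw [DD_plane_z0, hA, hB, hC]; ring
  · rw [ff_plane hL h]; ring

lemma cross_prop {α β γ α' β' γ' : k} (h1 : β * γ' - γ * β' = 0) (h2 : γ * α' - α * γ' = 0)
    (h3 : α * β' - β * α' = 0) : ∃ a b c r r' : k, α = r * a ∧ β = r * b ∧ γ = r * c ∧
      α' = r' * a ∧ β' = r' * b ∧ γ' = r' * c := by
  by_cases hα : α = 0
  · by_cases hβ : β = 0
    · by_cases hγ : γ = 0
      · exact ⟨α', β', γ', 0, 1, by simp [hα, hβ, hγ]⟩
      · refine ⟨α, β, γ, 1, γ' / γ, by ring, by ring, by ring, ?_, ?_, ?_⟩ <;> field_simp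
        · linear_combination h2
        · linear_combination -h1
    · refine ⟨α, β, γ, 1, β' / β, by ring, by ring, by ring, ?_, ?_, ?_⟩ <;> field_simp
      · linear_combination -h3
      · linear_combination h1
  · refine ⟨α, β, γ, 1, α' / α, by ring, by ring, by ring, ?_, ?_, ?_⟩ <;> field_simp
    · linear_combination h3
    · linear_combination -h2

/-- the two residual lines are different -/
lemma cross_ne (hT : Smooth T) (hL : IsLine T L) (h : Adapted L b0 b1 z0 z1)
    {α β γ α' β' γ' : k} (hA : DD T b0 z0 = α * α') (hB : EE T b0 b1 z0 = α * β' + β * α')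
    (hC : DD T b1 z0 = β * β') (hD : DD T z0 b0 = α * γ' + γ * α')
    (hE : DD T z0 b1 = β * γ' + γ * β') (hG : ff T z0 = γ * γ') :
    β * γ' - γ * β' ≠ 0 ∨ γ * α' - α * γ' ≠ 0 ∨ α * β' - β * α' ≠ 0 := by
  by_contra hcon
  push Not at hcon
  obtain ⟨a, b, c, r, r', rfl, rfl, rfl, rfl, rfl, rfl⟩ := cross_prop hcon.1 hcon.2.1 hcon.2.2
  refine no_double hT h a b c (fun u v s hs => ⟨?_, ?_, ?_, ?_⟩)
  · rw [DD_plane_b0 hL h, hA, hB, hD]; linear_combination s * (2 * a * r * r') * hs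
  · rw [DD_plane_b1 hL h, hC, hB, hE]; linear_combination s * (2 * b * r * r') * hs
  · rw [DD_plane_z0, hA, hB, hC, hD, hE, hG]
    linear_combination (r * r' * (a * u + b * v + c * s) + 2 * c * s * r * r') * hs
  · rw [ff_plane hL h, hA, hB, hC, hD, hE, hG]
    linear_combination (r * r' * s * (a * u + b * v + c * s)) * hs

/-- derivative of the discriminant -/
def dDisc (A B C D E G A1 B1 C1 D1 E1 G1 : k) : k :=
  4 * (A1 * C * G + A * C1 * G + A * C * G1) + (B1 * D * E + B * D1 * E + B * D * E1)
    - (A1 * E ^ 2 + 2 * A * E * E1) - (C1 * D ^ 2 + 2 * C * D * D1) - (G1 * B ^ 2 + 2 * G * B * B1)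

lemma simple_root (hT : Smooth T) (hL : IsLine T L) (h : Adapted L b0 b1 z0 z1)
    (hd : Delta T b0 b1 z0 = 0) :
    dDisc (DD T b0 z0) (EE T b0 b1 z0) (DD T b1 z0) (DD T z0 b0) (DD T z0 b1) (ff T z0)
     (DD T b0 z1) (EE T b0 b1 z1) (DD T b1 z1) (EE T z0 z1 b0) (EE T z0 z1 b1) (DD T z0 z1) ≠ 0 := by
  obtain ⟨α, β, γ, α', β', γ', hA, hB, hC, hD, hE, hG⟩ := splits hd
  intro hdd
  refine sing_plane hT h _ _ _ (cross_ne hT hL h hA hB hC hD hE hG) ?_ ?_ ?_ ?_ ?_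
  · rw [DD_plane_b0 hL h, hA, hB, hD]; ring
  · rw [DD_plane_b1 hL h, hC, hB, hE]; ring
  · rw [DD_plane_z0, hA, hB, hC, hD, hE, hG]; ring
  · rw [DD_plane, EE_swap T b0 z0, EE_swap' T z0 b0, EE_swap T b1 z0, EE_swap' T z0 b1]
    rw [dDisc, hA, hB, hC, hD, hE, hG] at hdd
    linear_combination -hdd
  · rw [ff_plane hL h, hA, hB, hC, hD, hE, hG]; ring

/-- the discriminant along a pencil of planes, as a polynomial -/
noncomputable def dPoly (T : V →ₗ[k] V →ₗ[k] V →ₗ[k] k) (b0 b1 z0 z1 : V) : Polynomial k :=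
  disc' (Polynomial.C (DD T b0 z0) + Polynomial.C (DD T b0 z1) * Polynomial.X)
    (Polynomial.C (EE T b0 b1 z0) + Polynomial.C (EE T b0 b1 z1) * Polynomial.X)
    (Polynomial.C (DD T b1 z0) + Polynomial.C (DD T b1 z1) * Polynomial.X)
    (Polynomial.C (DD T z0 b0) + Polynomial.C (EE T z0 z1 b0) * Polynomial.X
      + Polynomial.C (DD T z1 b0) * Polynomial.X ^ 2)
    (Polynomial.C (DD T z0 b1) + Polynomial.C (EE T z0 z1 b1) * Polynomial.X
      + Polynomial.C (DD T z1 b1) * Polynomial.X ^ 2)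
    (Polynomial.C (ff T z0) + Polynomial.C (DD T z0 z1) * Polynomial.X
      + Polynomial.C (DD T z1 z0) * Polynomial.X ^ 2 + Polynomial.C (ff T z1) * Polynomial.X ^ 3)
where
  disc' (A B C D E G : Polynomial k) : Polynomial k :=
    4 * A * C * G + B * D * E - A * E ^ 2 - C * D ^ 2 - G * B ^ 2

lemma dPoly_eval (t : k) : (dPoly T b0 b1 z0 z1).eval t = Delta T b0 b1 (z0 + t • z1) := by
  simp only [dPoly, dPoly.disc', Delta, disc, DD_add_left, DD_add_right, DD_smul_left, DD_smul_right,
    EE_smul_mid, EE_add_right, EE_smul_right, ff_add, ff_smul, Polynomial.eval_add,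
    Polynomial.eval_sub, Polynomial.eval_mul, Polynomial.eval_pow, Polynomial.eval_C,
    Polynomial.eval_X, Polynomial.eval_ofNat]
  ring

lemma dPoly_deriv : (dPoly T b0 b1 z0 z1).derivative.eval 0 =
    dDisc (DD T b0 z0) (EE T b0 b1 z0) (DD T b1 z0) (DD T z0 b0) (DD T z0 b1) (ff T z0)
     (DD T b0 z1) (EE T b0 b1 z1) (DD T b1 z1) (EE T z0 z1 b0) (EE T z0 z1 b1) (DD T z0 z1) := by
  simp [dPoly, dPoly.disc', dDisc, sq]
  ring

lemma dPoly_shift (t : k) : (dPoly T b0 b1 z0 z1).comp (Polynomial.X + Polynomial.C t) =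
    dPoly T b0 b1 (z0 + t • z1) z1 := by
  refine Polynomial.funext (fun r => ?_)
  rw [Polynomial.eval_comp, dPoly_eval, dPoly_eval]
  simp only [Polynomial.eval_add, Polynomial.eval_X, Polynomial.eval_C]
  congr 1
  module

lemma Adapted.shift (h : Adapted L b0 b1 z0 z1) (t : k) : Adapted L b0 b1 (z0 + t • z1) z1 := by
  refine ⟨h.mem0, h.mem1, h.spanL, fun u v s r hr => ?_, fun x => ?_⟩
  · obtain ⟨h1, h2, h3, h4⟩ := h.indep u v s (s * t + r) (by rw [← hr]; module)
    subst h3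
    exact ⟨h1, h2, rfl, by linear_combination h4⟩
  · obtain ⟨u, v, s, r, rfl⟩ := h.span x
    exact ⟨u, v, s, r - s * t, by module⟩

lemma Adapted.swap (h : Adapted L b0 b1 z0 z1) : Adapted L b0 b1 z1 z0 := by
  refine ⟨h.mem0, h.mem1, h.spanL, fun u v s r hr => ?_, fun x => ?_⟩
  · obtain ⟨h1, h2, h3, h4⟩ := h.indep u v r s (by rw [← hr]; module)
    exact ⟨h1, h2, h4, h3⟩
  · obtain ⟨u, v, s, r, rfl⟩ := h.span x
    exact ⟨u, v, r, s, by module⟩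

lemma dPoly_ne_zero (hT : Smooth T) (hL : IsLine T L) (h : Adapted L b0 b1 z0 z1) :
    dPoly T b0 b1 z0 z1 ≠ 0 := by
  intro h0
  have h1 : Delta T b0 b1 z0 = 0 := by
    have := dPoly_eval (T := T) (b0 := b0) (b1 := b1) (z0 := z0) (z1 := z1) 0
    rw [h0] at this
    simpa using this.symm
  apply simple_root hT hL h h1
  rw [← dPoly_deriv, h0]
  simp

/-- after changing the complement, the plane of `z1` is not special -/
lemma exists_good (hT : Smooth T) (hL : IsLine T L) (h : Adapted L b0 b1 z0 z1) :
    ∃ w0 w1, Adapted L b0 b1 w0 w1 ∧ Delta T b0 b1 w1 ≠ 0 := by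
  by_contra hcon
  push Not at hcon
  apply dPoly_ne_zero hT hL h
  refine Polynomial.funext (fun r => ?_)
  rw [dPoly_eval, Polynomial.eval_zero]
  exact hcon z1 _ (h.shift r).swap

lemma dPoly_natDegree : (dPoly T b0 b1 z0 z1).natDegree ≤ 5 := by
  unfold dPoly dPoly.disc'
  compute_degree

lemma dPoly_coeff5 : (dPoly T b0 b1 z0 z1).coeff 5 = Delta T b0 b1 z1 := by
  unfold dPoly dPoly.disc' Delta disc
  compute_degree
  all_goals simp
  all_goals ring

lemma dPoly_roots (hT : Smooth T) (hL : IsLine T L) (h : Adapted L b0 b1 z0 z1)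
    (hd : Delta T b0 b1 z1 ≠ 0) : ∃ R : Finset k, R.card = 5 ∧
      ∀ t, t ∈ R ↔ Delta T b0 b1 (z0 + t • z1) = 0 := by
  classical
  have hne := dPoly_ne_zero hT hL h
  have hdeg : (dPoly T b0 b1 z0 z1).natDegree = 5 := by
    refine le_antisymm dPoly_natDegree (Polynomial.le_natDegree_of_ne_zero ?_)
    rw [dPoly_coeff5]; exact hd
  have hnodup : (dPoly T b0 b1 z0 z1).roots.Nodup := by
    rw [Multiset.nodup_iff_count_le_one]
    intro t
    rw [Polynomial.count_roots]
    by_contra hcon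
    push Not at hcon
    have h2 := (Polynomial.one_lt_rootMultiplicity_iff_isRoot hne).1 hcon
    have h0 : Delta T b0 b1 (z0 + t • z1) = 0 := by
      rw [← dPoly_eval]; exact h2.1
    apply simple_root hT hL (h.shift t) h0
    rw [← dPoly_deriv, ← dPoly_shift, Polynomial.derivative_comp]
    have := h2.2
    simp only [Polynomial.IsRoot] at this
    simp [Polynomial.eval_comp, this]
  refine ⟨(dPoly T b0 b1 z0 z1).roots.toFinset, ?_, fun t => ?_⟩
  · rw [Multiset.toFinset_card_of_nodup hnodup, ← hdeg]
    exact (IsAlgClosed.splits _).natDegree_eq_card_roots.symm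
  · rw [Multiset.mem_toFinset, Polynomial.mem_roots hne, Polynomial.IsRoot, dPoly_eval]

end Planes
end CubicSurf


namespace CubicSurf

set_option linter.unusedSectionVars false
set_option linter.unusedSimpArgs false

section Lines
variable {k V : Type*} [Field k] [IsAlgClosed k] [AddCommGroup V] [Module k V]
  [FiniteDimensional k V]
variable {T : V →ₗ[k] V →ₗ[k] V →ₗ[k] k} {L : Submodule k V} {b0 b1 z0 z1 : V}

lemma exists_adapted (hV : Module.finrank k V = 4) (hL : Module.finrank k L = 2) :
    ∃ b0 b1 z0 z1, Adapted L b0 b1 z0 z1 := by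
  obtain ⟨W, hW⟩ := Submodule.exists_isCompl L
  have hW2 : Module.finrank k W = 2 := by
    have := Submodule.finrank_add_eq_of_isCompl hW
    omega
  let b := Module.finBasisOfFinrankEq k L hL
  let c := Module.finBasisOfFinrankEq k W hW2
  have hb : ∀ x ∈ L, ∃ u v : k, x = u • (b 0 : V) + v • (b 1 : V) := fun x hx => by
    have := congrArg Subtype.val (b.sum_repr ⟨x, hx⟩)
    simp only [Fin.sum_univ_two, Submodule.coe_add, Submodule.coe_smul] at this
    exact ⟨_, _, this.symm⟩
  have hc : ∀ x ∈ W, ∃ u v : k, x = u • (c 0 : V) + v • (c 1 : V) := fun x hx => by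
    have := congrArg Subtype.val (c.sum_repr ⟨x, hx⟩)
    simp only [Fin.sum_univ_two, Submodule.coe_add, Submodule.coe_smul] at this
    exact ⟨_, _, this.symm⟩
  refine ⟨b 0, b 1, c 0, c 1, (b 0).2, (b 1).2, hb, fun u v s t h => ?_, fun x => ?_⟩
  · have h1 : u • (b 0 : V) + v • (b 1 : V) = 0 := by
      have hm : u • (b 0 : V) + v • (b 1 : V) ∈ L :=
        L.add_mem (L.smul_mem _ (b 0).2) (L.smul_mem _ (b 1).2)
      have hm' : u • (b 0 : V) + v • (b 1 : V) ∈ W := by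
        have : u • (b 0 : V) + v • (b 1 : V) = -(s • (c 0 : V) + t • (c 1 : V)) := by
          rw [← sub_eq_zero, ← h]; abel
        rw [this]
        exact W.neg_mem (W.add_mem (W.smul_mem _ (c 0).2) (W.smul_mem _ (c 1).2))
      exact (Submodule.disjoint_def.1 hW.disjoint) _ hm hm'
    have h2 : s • (c 0 : V) + t • (c 1 : V) = 0 := by
      rw [add_assoc, h1, zero_add] at h
      exact h
    have hb' : ∀ i, ![u, v] i = 0 := Fintype.linearIndependent_iff.1 b.linearIndependent ![u, v]
      (Subtype.ext (by simpa [Fin.sum_univ_two] using h1))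
    have hc' : ∀ i, ![s, t] i = 0 := Fintype.linearIndependent_iff.1 c.linearIndependent ![s, t]
      (Subtype.ext (by simpa [Fin.sum_univ_two] using h2))
    exact ⟨hb' 0, hb' 1, hc' 0, hc' 1⟩
  · have : x ∈ L ⊔ W := by rw [hW.sup_eq_top]; trivial
    obtain ⟨y, hy, z, hz, rfl⟩ := Submodule.mem_sup.1 this
    obtain ⟨u, v, rfl⟩ := hb y hy
    obtain ⟨s, t, rfl⟩ := hc z hz
    exact ⟨u, v, s, t, by abel⟩

lemma mem_plane (h : Adapted L b0 b1 z0 z1) (x : V) :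
    x ∈ L ⊔ Submodule.span k {z0} ↔ ∃ u v s : k, x = u • b0 + v • b1 + s • z0 := by
  constructor
  · intro hx
    obtain ⟨y, hy, z, hz, rfl⟩ := Submodule.mem_sup.1 hx
    obtain ⟨u, v, rfl⟩ := h.spanL y hy
    obtain ⟨s, rfl⟩ := Submodule.mem_span_singleton.1 hz
    exact ⟨u, v, s, rfl⟩
  · rintro ⟨u, v, s, rfl⟩
    exact Submodule.add_mem_sup (L.add_mem (L.smul_mem _ h.mem0) (L.smul_mem _ h.mem1))
      (Submodule.smul_mem _ _ (Submodule.mem_span_singleton_self z0))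

lemma Adapted.memL (h : Adapted L b0 b1 z0 z1) {u v s t : k}
    (hx : u • b0 + v • b1 + s • z0 + t • z1 ∈ L) : s = 0 ∧ t = 0 := by
  obtain ⟨u', v', h'⟩ := h.spanL _ hx
  obtain ⟨-, -, h3, h4⟩ := h.indep (u - u') (v - v') s t (by
    rw [← sub_eq_zero] at h'
    rw [← h']
    module)
  exact ⟨h3, h4⟩

/-- the line with equation `α u + β v + γ s = 0` in the plane -/
noncomputable def lineIn (b0 b1 z0 : V) (α β γ : k) : Submodule k V :=
  (LinearMap.ker (Fintype.linearCombination k ![α, β, γ])).map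
    (Fintype.linearCombination k ![b0, b1, z0])

lemma mem_lineIn {α β γ : k} {x : V} : x ∈ lineIn b0 b1 z0 α β γ ↔
    ∃ u v s : k, α * u + β * v + γ * s = 0 ∧ x = u • b0 + v • b1 + s • z0 := by
  simp only [lineIn, Submodule.mem_map, LinearMap.mem_ker, Fintype.linearCombination_apply,
    Fin.sum_univ_three, smul_eq_mul]
  constructor
  · rintro ⟨y, hy, rfl⟩
    refine ⟨y 0, y 1, y 2, ?_, rfl⟩
    rw [← hy]
    simp
    ring
  · rintro ⟨u, v, s, h, rfl⟩
    refine ⟨![u, v, s], ?_, by simp⟩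
    rw [← h]
    simp
    ring

lemma finrank_lineIn (h : Adapted L b0 b1 z0 z1) {α β γ : k} (hne : α ≠ 0 ∨ β ≠ 0) :
    Module.finrank k (lineIn b0 b1 z0 α β γ) = 2 := by
  have hinj : Function.Injective (Fintype.linearCombination k ![b0, b1, z0]) := by
    rw [← LinearMap.ker_eq_bot, LinearMap.ker_eq_bot']
    intro y hy
    simp only [Fintype.linearCombination_apply, Fin.sum_univ_three] at hy
    obtain ⟨h0, h1, h2, -⟩ := h.indep (y 0) (y 1) (y 2) 0 (by rw [← hy]; simp)
    ext i; fin_cases i <;> assumption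
  have h1 : Module.finrank k (lineIn b0 b1 z0 α β γ) =
      Module.finrank k (LinearMap.ker (Fintype.linearCombination k ![α, β, γ])) :=
    (Submodule.equivMapOfInjective _ hinj _).finrank_eq.symm
  have h2 : (Fintype.linearCombination k ![α, β, γ] : (Fin 3 → k) →ₗ[k] k) ≠ 0 := by
    intro h0
    have e0 := LinearMap.congr_fun h0 ![1, 0, 0]
    have e1 := LinearMap.congr_fun h0 ![0, 1, 0]
    simp [Fintype.linearCombination_apply, Fin.sum_univ_three] at e0 e1
    rcases hne with h | h <;> contradiction
  have h3 := Module.Dual.finrank_ker_add_one_of_ne_zero h2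
  have h4 : Module.finrank k (Fin 3 → k) = 3 := by simp
  rw [h1]
  exact Nat.add_right_cancel (h3.trans h4)

lemma le_of_cover (M A B C : Submodule k V) (h : ∀ x ∈ M, x ∈ A ∨ x ∈ B ∨ x ∈ C) :
    M ≤ A ∨ M ≤ B ∨ M ≤ C := by
  have := Subspace.exists_eq_top_of_iUnion_eq_univ (k := k) (E := M)
    (p := ![A.comap M.subtype, B.comap M.subtype, C.comap M.subtype]) (by
      rw [Set.eq_univ_iff_forall]
      intro x
      rw [Set.mem_iUnion]
      rcases h x.1 x.2 with h | h | h
      · exact ⟨0, h⟩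
      · exact ⟨1, h⟩
      · exact ⟨2, h⟩)
  obtain ⟨i, hi⟩ := this
  fin_cases i
  · left; exact Submodule.comap_subtype_eq_top.1 hi
  · right; left; exact Submodule.comap_subtype_eq_top.1 hi
  · right; right; exact Submodule.comap_subtype_eq_top.1 hi

/-- The data of a tritangent plane. -/
structure Tri (T : V →ₗ[k] V →ₗ[k] V →ₗ[k] k) (L P m m' : Submodule k V) : Prop where
  line : IsLine T m
  line' : IsLine T m'
  ne : m ≠ m'
  neL : m ≠ L
  neL' : m' ≠ L
  le : m ≤ P
  le' : m' ≤ P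
  cover : ∀ x ∈ P, ff T x = 0 → x ∈ L ∨ x ∈ m ∨ x ∈ m'

lemma Tri.swap {P m m' : Submodule k V} (h : Tri T L P m m') : Tri T L P m' m :=
  ⟨h.line', h.line, h.ne.symm, h.neL', h.neL, h.le', h.le, fun x hx hf => by
    have := h.cover x hx hf; tauto⟩

lemma eq_of_le_line {M M' : Submodule k V} (hM : IsLine T M) (hM' : IsLine T M') (h : M ≤ M') :
    M = M' := Submodule.eq_of_le_of_finrank_eq h (by rw [hM.1, hM'.1])

lemma Tri.eq_of {P m m' : Submodule k V} (hL : IsLine T L) (h : Tri T L P m m')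
    {M : Submodule k V} (hM : IsLine T M) (hMP : M ≤ P) : M = L ∨ M = m ∨ M = m' := by
  rcases le_of_cover M L m m' (fun x hx => h.cover x (hMP hx) (hM.2 x hx)) with h1 | h1 | h1
  · exact Or.inl (eq_of_le_line hM hL h1)
  · exact Or.inr (Or.inl (eq_of_le_line hM h.line h1))
  · exact Or.inr (Or.inr (eq_of_le_line hM h.line' h1))

lemma tritangent (hT : Smooth T) (hL : IsLine T L) (h : Adapted L b0 b1 z0 z1)
    (hd : Delta T b0 b1 z0 = 0) : ∃ m m', Tri T L (L ⊔ Submodule.span k {z0}) m m' := by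
  obtain ⟨α, β, γ, α', β', γ', hA, hB, hC, hD, hE, hG⟩ := splits hd
  have hne := not_prop_s hT hL h hA hB hC
  have hne' := not_prop_s hT hL h (α := α') (β := β') (α' := α) (β' := β)
    (by rw [hA]; ring) (by rw [hB]; ring) (by rw [hC]; ring)
  have hcr := cross_ne hT hL h hA hB hC hD hE hG
  have hff : ∀ u v s : k, ff T (u • b0 + v • b1 + s • z0) =
      s * ((α * u + β * v + γ * s) * (α' * u + β' * v + γ' * s)) := fun u v s => by
    rw [ff_plane hL h, hA, hB, hC, hD, hE, hG]; ring
  have hnl : ∀ α β γ : k, α ≠ 0 ∨ β ≠ 0 → lineIn b0 b1 z0 α β γ ≠ L := by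
    intro α β γ hne heq
    have h0 : b0 ∈ lineIn b0 b1 z0 α β γ := by rw [heq]; exact h.mem0
    have h1 : b1 ∈ lineIn b0 b1 z0 α β γ := by rw [heq]; exact h.mem1
    obtain ⟨u, v, s, he, hx⟩ := mem_lineIn.1 h0
    obtain ⟨hu, hv, hs, -⟩ := h.indep (u - 1) v s 0 (by
      rw [← sub_eq_zero] at hx; rw [← neg_eq_zero, ← hx]; module)
    obtain ⟨u', v', s', he', hx'⟩ := mem_lineIn.1 h1
    obtain ⟨hu', hv', hs', -⟩ := h.indep u' (v' - 1) s' 0 (by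
      rw [← sub_eq_zero] at hx'; rw [← neg_eq_zero, ← hx']; module)
    rw [hv, hs, sub_eq_zero.1 hu] at he
    rw [hu', hs', sub_eq_zero.1 hv'] at he'
    rcases hne with h | h <;> apply h
    · linear_combination he
    · linear_combination he'
  refine ⟨lineIn b0 b1 z0 α β γ, lineIn b0 b1 z0 α' β' γ', ⟨finrank_lineIn h hne, ?_⟩,
    ⟨finrank_lineIn h hne', ?_⟩, ?_, hnl _ _ _ hne, hnl _ _ _ hne', ?_, ?_, ?_⟩
  · intro x hx
    obtain ⟨u, v, s, he, rfl⟩ := mem_lineIn.1 hx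
    rw [hff, he]; ring
  · intro x hx
    obtain ⟨u, v, s, he, rfl⟩ := mem_lineIn.1 hx
    rw [hff, he]; ring
  · intro heq
    have key : ∀ u v s : k, α * u + β * v + γ * s = 0 → α' * u + β' * v + γ' * s = 0 := by
      intro u v s he
      have : u • b0 + v • b1 + s • z0 ∈ lineIn b0 b1 z0 α' β' γ' := by
        rw [← heq]; exact mem_lineIn.2 ⟨u, v, s, he, rfl⟩
      obtain ⟨u', v', s', he', hx⟩ := mem_lineIn.1 this
      obtain ⟨h1, h2, h3, -⟩ := h.indep (u - u') (v - v') (s - s') 0 (by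
        rw [← sub_eq_zero] at hx; rw [← hx]; module)
      rw [sub_eq_zero.1 h1, sub_eq_zero.1 h2, sub_eq_zero.1 h3, he']
    rcases hcr with h | h | h <;> apply h
    · linear_combination -key 0 (γ) (-β) (by ring)
    · linear_combination -key (-γ) 0 (α) (by ring)
    · linear_combination -key (β) (-α) 0 (by ring)
  · intro x hx
    obtain ⟨u, v, s, he, rfl⟩ := mem_lineIn.1 hx
    exact (mem_plane h _).2 ⟨u, v, s, rfl⟩
  · intro x hx
    obtain ⟨u, v, s, he, rfl⟩ := mem_lineIn.1 hx
    exact (mem_plane h _).2 ⟨u, v, s, rfl⟩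
  · intro x hx hf
    obtain ⟨u, v, s, rfl⟩ := (mem_plane h _).1 hx
    rw [hff] at hf
    rcases mul_eq_zero.1 hf with h1 | h1
    · left
      rw [h1, zero_smul, add_zero]
      exact L.add_mem (L.smul_mem _ h.mem0) (L.smul_mem _ h.mem1)
    · rcases mul_eq_zero.1 h1 with h1 | h1
      · exact Or.inr (Or.inl (mem_lineIn.2 ⟨u, v, s, h1, rfl⟩))
      · exact Or.inr (Or.inr (mem_lineIn.2 ⟨u, v, s, h1, rfl⟩))

lemma isotropic_disc {A B C D E G p0 p1 r0 r1 : k} (hp : p0 ≠ 0 ∨ p1 ≠ 0)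
    (h1 : A * p0 ^ 2 + B * p0 * p1 + C * p1 ^ 2 = 0)
    (h2 : p0 * (2 * A * r0 + B * r1 + D) + p1 * (B * r0 + 2 * C * r1 + E) = 0)
    (h3 : A * r0 ^ 2 + B * r0 * r1 + C * r1 ^ 2 + D * r0 + E * r1 + G = 0) :
    disc A B C D E G = 0 := by
  have h4 : disc A B C D E G = disc A B C (2 * A * r0 + B * r1 + D) (B * r0 + 2 * C * r1 + E)
      (A * r0 ^ 2 + B * r0 * r1 + C * r1 ^ 2 + D * r0 + E * r1 + G) := by
    simp only [disc]; ring
  rw [h4, h3]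
  generalize 2 * A * r0 + B * r1 + D = D' at *
  generalize B * r0 + 2 * C * r1 + E = E' at *
  have a0 : p0 ^ 2 * disc A B C D' E' 0 = 0 := by
    simp only [disc]
    linear_combination (p0 * B * E' - C * (p0 * D' - p1 * E')) * h2 - E' ^ 2 * h1
  have a1 : p1 ^ 2 * disc A B C D' E' 0 = 0 := by
    simp only [disc]
    linear_combination (p1 * B * D' - A * (p1 * E' - p0 * D')) * h2 - D' ^ 2 * h1
  rcases hp with h | h
  · exact (mul_eq_zero.1 a0).resolve_left (pow_ne_zero 2 h)
  · exact (mul_eq_zero.1 a1).resolve_left (pow_ne_zero 2 h)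

/-- a line meeting `L` and having a point on the plane of `z0` outside `L` -/
lemma delta_of_line (hL : IsLine T L) (h : Adapted L b0 b1 z0 z1) {M : Submodule k V}
    (hM : IsLine T M) {p l : V} (hp : p ∈ L) (hpM : p ∈ M) (hp0 : p ≠ 0) (hl : l ∈ L)
    (hlM : l + z0 ∈ M) : Delta T b0 b1 z0 = 0 := by
  obtain ⟨p0, p1, rfl⟩ := h.spanL p hp
  obtain ⟨r0, r1, rfl⟩ := h.spanL l hl
  have key : ∀ c : k, 0 + ((DD T b0 z0) * r0 ^ 2 + (EE T b0 b1 z0) * r0 * r1 + (DD T b1 z0) * r1 ^ 2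
      + (DD T z0 b0) * r0 + (DD T z0 b1) * r1 + ff T z0) + (p0 * (2 * (DD T b0 z0) * r0
      + (EE T b0 b1 z0) * r1 + (DD T z0 b0))
      + p1 * ((EE T b0 b1 z0) * r0 + 2 * (DD T b1 z0) * r1 + (DD T z0 b1))) * c +
      ((DD T b0 z0) * p0 ^ 2 + (EE T b0 b1 z0) * p0 * p1 + (DD T b1 z0) * p1 ^ 2) * c ^ 2 = 0 := by
    intro c
    have h1 := hM.2 _ (M.add_mem hlM (M.smul_mem c hpM))
    have h2 : r0 • b0 + r1 • b1 + z0 + c • (p0 • b0 + p1 • b1) =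
      (r0 + c * p0) • b0 + (r1 + c * p1) • b1 + (1 : k) • z0 := by module
    rw [h2, ff_plane hL h] at h1
    linear_combination h1
  obtain ⟨h3, h2, h1⟩ := quad_zero key
  refine isotropic_disc ?_ h1 h2 (by linear_combination h3)
  by_contra hcon
  push Not at hcon
  apply hp0
  simp [hcon.1, hcon.2]

/-- normal form of points -/
lemma exists_affine_pt (h : Adapted L b0 b1 z0 z1) {M : Submodule k V} (hM : ¬ M ≤ L) :
    (∃ l ∈ L, ∃ t : k, l + (z0 + t • z1) ∈ M) ∨ (∃ l ∈ L, l + z1 ∈ M) := by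
  obtain ⟨w, hwM, hwL⟩ := SetLike.not_le_iff_exists.1 hM
  obtain ⟨u, v, s, t, rfl⟩ := h.span w
  have hl : u • b0 + v • b1 ∈ L := L.add_mem (L.smul_mem _ h.mem0) (L.smul_mem _ h.mem1)
  by_cases hs : s = 0
  · right
    have ht : t ≠ 0 := by
      rintro rfl
      apply hwL
      simpa [hs] using hl
    refine ⟨t⁻¹ • (u • b0 + v • b1), L.smul_mem _ hl, ?_⟩
    have := M.smul_mem t⁻¹ hwM
    convert this using 1
    rw [hs, smul_add _ _ (t • z1), smul_smul, inv_mul_cancel₀ ht]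
    simp
  · left
    refine ⟨s⁻¹ • (u • b0 + v • b1), L.smul_mem _ hl, s⁻¹ * t, ?_⟩
    have := M.smul_mem s⁻¹ hwM
    convert this using 1
    rw [smul_add _ _ (t • z1), smul_add _ _ (s • z0), smul_smul, smul_smul, inv_mul_cancel₀ hs]
    simp [add_assoc]

/-- meeting -/
def Meets (M L : Submodule k V) : Prop := ∃ p, p ∈ M ∧ p ∈ L ∧ p ≠ 0

/-- The structure of lines meeting a line. -/
structure LStr (T : V →ₗ[k] V →ₗ[k] V →ₗ[k] k) (L : Submodule k V) (b0 b1 z0 z1 : V)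
    (R : Finset k) (m m' : k → Submodule k V) : Prop where
  adapted : Adapted L b0 b1 z0 z1
  card : R.card = 5
  tri : ∀ t ∈ R, Tri T L (L ⊔ Submodule.span k {z0 + t • z1}) (m t) (m' t)
  all : ∀ M, IsLine T M → M ≠ L → Meets M L → ∃ t ∈ R, M = m t ∨ M = m' t

lemma le_plane (hV : Module.finrank k V = 4) (hL : IsLine T L) {M : Submodule k V}
    (hM : IsLine T M) {p l z : V} (hp : p ∈ L) (hpM : p ∈ M) (hp0 : p ≠ 0) (hl : l ∈ L)
    (hlM : l + z ∈ M) (hz : z ∉ L) : M ≤ L ⊔ Submodule.span k {z} := by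
  have hsp : Submodule.span k {p, l + z} = M := by
    refine Submodule.eq_of_le_of_finrank_eq ?_ ?_
    · rw [Submodule.span_le]
      rintro x (rfl | rfl)
      · exact hpM
      · exact hlM
    · rw [hM.1]
      have hli : LinearIndependent k ![p, l + z] := by
        rw [LinearIndependent.pair_iff' hp0]
        intro a ha
        apply hz
        have : z = a • p - l := by rw [ha]; abel
        rw [this]
        exact L.sub_mem (L.smul_mem _ hp) hl
      have := finrank_span_eq_card hli
      rw [Matrix.range_cons, Matrix.range_cons, Matrix.range_empty, Set.union_empty,
        Set.singleton_union] at this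
      simpa using this
  rw [← hsp, Submodule.span_le]
  rintro x (rfl | rfl)
  · exact Submodule.mem_sup_left hp
  · exact Submodule.add_mem_sup hl (Submodule.mem_span_singleton_self z)

lemma exists_LStr (hV : Module.finrank k V = 4) (hT : Smooth T) (hL : IsLine T L) :
    ∃ b0 b1 z0 z1 R m m', LStr T L b0 b1 z0 z1 R m m' := by
  classical
  obtain ⟨b0, b1, y0, y1, h'⟩ := exists_adapted hV hL.1
  obtain ⟨z0, z1, h, hd⟩ := exists_good hT hL h'
  obtain ⟨R, hR, hRt⟩ := dPoly_roots hT hL h hd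
  have htri : ∀ t : k, ∃ m m', t ∈ R → Tri T L (L ⊔ Submodule.span k {z0 + t • z1}) m m' := by
    intro t
    by_cases ht : t ∈ R
    · obtain ⟨m, m', hm⟩ := tritangent hT hL (h.shift t) ((hRt t).1 ht)
      exact ⟨m, m', fun _ => hm⟩
    · exact ⟨⊥, ⊥, fun h => absurd h ht⟩
  choose m m' hm using htri
  refine ⟨b0, b1, z0, z1, R, m, m', h, hR, hm, fun M hM hne ⟨p, hpM, hpL, hp0⟩ => ?_⟩
  have hnle : ¬ M ≤ L := fun hle => hne (eq_of_le_line hM hL hle)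
  rcases exists_affine_pt h hnle with ⟨l, hl, t, hlt⟩ | ⟨l, hl, hlt⟩
  · have ht : t ∈ R := (hRt t).2 (delta_of_line hL (h.shift t) hM hpL hpM hp0 hl hlt)
    refine ⟨t, ht, ?_⟩
    have hle := le_plane hV hL hM hpL hpM hp0 hl hlt (fun hz => by
      have := h.memL (u := 0) (v := 0) (s := 1) (t := t) (by simpa using hz)
      exact one_ne_zero this.1)
    exact ((hm t ht).eq_of hL hM hle).resolve_left hne
  · exact absurd (delta_of_line hL h.swap hM hpL hpM hp0 hl hlt) hd

end Lines
end CubicSurf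


namespace CubicSurf

set_option linter.unusedSectionVars false
set_option linter.unusedSimpArgs false

section Count
variable {k V : Type*} [Field k] [IsAlgClosed k] [AddCommGroup V] [Module k V]
  [FiniteDimensional k V]
variable {T : V →ₗ[k] V →ₗ[k] V →ₗ[k] k} {L : Submodule k V} {b0 b1 z0 z1 : V}

lemma Meets.symm {M N : Submodule k V} (h : Meets M N) : Meets N M := by
  obtain ⟨p, h1, h2, h3⟩ := h
  exact ⟨p, h2, h1, h3⟩

lemma meets_of_finrank {M N P : Submodule k V} (hM : M ≤ P) (hN : N ≤ P)
    (h : Module.finrank k P < Module.finrank k M + Module.finrank k N) : Meets M N := by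
  have h1 := Submodule.finrank_sup_add_finrank_inf_eq M N
  have h2 : Module.finrank k (M ⊔ N : Submodule k V) ≤ Module.finrank k P :=
    Submodule.finrank_mono (sup_le hM hN)
  have h3 : M ⊓ N ≠ ⊥ := by
    intro h0
    rw [h0, finrank_bot] at h1
    omega
  obtain ⟨x, hx, hx0⟩ := Submodule.exists_mem_ne_zero_of_ne_bot h3
  exact ⟨x, hx.1, hx.2, hx0⟩

lemma finrank_plane_le (hL : IsLine T L) (z : V) :
    Module.finrank k (L ⊔ Submodule.span k {z} : Submodule k V) ≤ 3 := by
  have h1 := Submodule.finrank_add_le_finrank_add_finrank L (Submodule.span k {z})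
  have h2 := finrank_span_le_card (R := k) ({z} : Set V)
  simp at h2
  have := hL.1
  omega

lemma Tri.finrank (hL : IsLine T L) {P m m' : Submodule k V} (h : Tri T L P m m') (hLP : L ≤ P) :
    3 ≤ Module.finrank k P := by
  have hlt : L < P := by
    refine lt_of_le_of_ne hLP ?_
    rintro rfl
    exact h.neL (eq_of_le_line h.line hL h.le)
  have := Submodule.finrank_lt_finrank_of_lt hlt
  have := hL.1
  omega

lemma nbrs (hV : Module.finrank k V = 4) (hT : Smooth T) (hL : IsLine T L) :
    ∃ N : Finset (Submodule k V), N.card ≤ 10 ∧ ∀ M, M ∈ N ↔ (IsLine T M ∧ M ≠ L ∧ Meets M L) := by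
  classical
  obtain ⟨b0, b1, z0, z1, R, m, m', h⟩ := exists_LStr hV hT hL
  refine ⟨(R.image m ∪ R.image m').filter (fun M => IsLine T M ∧ M ≠ L ∧ Meets M L), ?_, ?_⟩
  · refine (Finset.card_filter_le _ _).trans ((Finset.card_union_le _ _).trans ?_)
    have h1 := Finset.card_image_le (s := R) (f := m)
    have h2 := Finset.card_image_le (s := R) (f := m')
    have := h.card
    omega
  · intro M
    rw [Finset.mem_filter]
    refine ⟨fun h => h.2, fun hM => ⟨?_, hM⟩⟩
    obtain ⟨t, ht, h1 | h1⟩ := h.all M hM.1 hM.2.1 hM.2.2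
    · exact Finset.mem_union_left _ (Finset.mem_image.2 ⟨t, ht, h1.symm⟩)
    · exact Finset.mem_union_right _ (Finset.mem_image.2 ⟨t, ht, h1.symm⟩)

lemma lines_le (hV : Module.finrank k V = 4) (hT : Smooth T) (hL : IsLine T L) :
    {M | IsLine T M}.Finite ∧ {M | IsLine T M}.ncard ≤ 27 := by
  classical
  obtain ⟨b0, b1, z0, z1, R, m, m', h⟩ := exists_LStr hV hT hL
  obtain ⟨t, ht⟩ : R.Nonempty := by rw [← Finset.card_pos, h.card]; norm_num
  have tri := h.tri t ht
  set P := L ⊔ Submodule.span k {z0 + t • z1} with hP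
  have hLP : L ≤ P := le_sup_left
  have hP3 : Module.finrank k P ≤ 3 := finrank_plane_le hL _
  have hP3' := tri.finrank hL hLP
  have hmL := tri.line.1
  have hmL' := tri.line'.1
  have hL2 := hL.1
  have m1 : Meets (m t) L := meets_of_finrank tri.le hLP (by omega)
  have m2 : Meets (m' t) L := meets_of_finrank tri.le' hLP (by omega)
  have m3 : Meets (m t) (m' t) := meets_of_finrank tri.le tri.le' (by omega)
  obtain ⟨N0, c0, n0⟩ := nbrs hV hT hL
  obtain ⟨N1, c1, n1⟩ := nbrs hV hT tri.line
  obtain ⟨N2, c2, n2⟩ := nbrs hV hT tri.line'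
  have cc : ∀ (N : Finset (Submodule k V)) (A B : Submodule k V), A ∈ N → B ∈ N → A ≠ B →
      N.card ≤ 10 → (N \ {A, B}).card ≤ 8 := by
    intro N A B hA hB hAB hN
    rw [Finset.card_sdiff_of_subset (by
      intro x hx
      simp only [Finset.mem_insert, Finset.mem_singleton] at hx
      rcases hx with rfl | rfl <;> assumption), Finset.card_pair hAB]
    omega
  have d0 := cc N0 (m t) (m' t) ((n0 _).2 ⟨tri.line, tri.neL, m1⟩)
    ((n0 _).2 ⟨tri.line', tri.neL', m2⟩) tri.ne c0
  have d1 := cc N1 L (m' t) ((n1 _).2 ⟨hL, tri.neL.symm, m1.symm⟩)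
    ((n1 _).2 ⟨tri.line', tri.ne.symm, m3.symm⟩) tri.neL'.symm c1
  have d2 := cc N2 L (m t) ((n2 _).2 ⟨hL, tri.neL'.symm, m2.symm⟩)
    ((n2 _).2 ⟨tri.line, tri.ne, m3⟩) tri.neL.symm c2
  have hsub : {M | IsLine T M} ⊆ ((({L, m t, m' t} : Finset (Submodule k V)) ∪
      ((N0 \ {m t, m' t}) ∪ ((N1 \ {L, m' t}) ∪ (N2 \ {L, m t}))) : Finset (Submodule k V)) :
      Set (Submodule k V)) := by
    intro M hM
    have hM2 := hM.1
    obtain ⟨x, hxM, hxP, hx0⟩ : Meets M P := meets_of_finrank (P := ⊤) le_top le_top (by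
      rw [finrank_top]; omega)
    have hx := tri.cover x hxP (hM.2 x hxM)
    simp only [Finset.coe_union, Set.mem_union, Finset.mem_coe, Finset.mem_insert,
      Finset.mem_singleton, Finset.mem_sdiff, n0, n1, n2]
    by_cases e0 : M = L
    · tauto
    by_cases e1 : M = m t
    · tauto
    by_cases e2 : M = m' t
    · tauto
    right
    rcases hx with hx | hx | hx
    · left
      exact ⟨⟨hM, e0, x, hxM, hx, hx0⟩, by tauto⟩
    · right; left
      exact ⟨⟨hM, e1, x, hxM, hx, hx0⟩, by tauto⟩
    · right; right
      exact ⟨⟨hM, e2, x, hxM, hx, hx0⟩, by tauto⟩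
  refine ⟨(Finset.finite_toSet _).subset hsub,
    (Set.ncard_le_ncard hsub (Finset.finite_toSet _)).trans ?_⟩
  rw [Set.ncard_coe_finset]
  refine (Finset.card_union_le _ _).trans ?_
  have e0 := Finset.card_union_le (N0 \ {m t, m' t}) ((N1 \ {L, m' t}) ∪ (N2 \ {L, m t}))
  have e1 := Finset.card_union_le (N1 \ {L, m' t}) (N2 \ {L, m t})
  have e2 := Finset.card_le_three (a := L) (b := m t) (c := m' t)
  omega

end Count
end CubicSurf


namespace CubicSurf

set_option linter.unusedSectionVars false
set_option linter.unusedSimpArgs false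

lemma cubic_zero {k : Type*} [Field k] {a b c d t1 t2 t3 t4 : k} (h12 : t1 ≠ t2) (h13 : t1 ≠ t3)
    (h14 : t1 ≠ t4) (h23 : t2 ≠ t3) (h24 : t2 ≠ t4) (h34 : t3 ≠ t4)
    (e1 : a + b * t1 + c * t1 ^ 2 + d * t1 ^ 3 = 0) (e2 : a + b * t2 + c * t2 ^ 2 + d * t2 ^ 3 = 0)
    (e3 : a + b * t3 + c * t3 ^ 2 + d * t3 ^ 3 = 0)
    (e4 : a + b * t4 + c * t4 ^ 2 + d * t4 ^ 3 = 0) : a = 0 ∧ b = 0 ∧ c = 0 ∧ d = 0 := by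
  have f2 : b + c * (t1 + t2) + d * (t1 ^ 2 + t1 * t2 + t2 ^ 2) = 0 :=
    (mul_eq_zero.1 (show (t1 - t2) * _ = 0 by linear_combination e1 - e2)).resolve_left
      (sub_ne_zero.2 h12)
  have f3 : b + c * (t1 + t3) + d * (t1 ^ 2 + t1 * t3 + t3 ^ 2) = 0 :=
    (mul_eq_zero.1 (show (t1 - t3) * _ = 0 by linear_combination e1 - e3)).resolve_left
      (sub_ne_zero.2 h13)
  have f4 : b + c * (t1 + t4) + d * (t1 ^ 2 + t1 * t4 + t4 ^ 2) = 0 :=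
    (mul_eq_zero.1 (show (t1 - t4) * _ = 0 by linear_combination e1 - e4)).resolve_left
      (sub_ne_zero.2 h14)
  have g3 : c + d * (t1 + t2 + t3) = 0 :=
    (mul_eq_zero.1 (show (t2 - t3) * _ = 0 by linear_combination f2 - f3)).resolve_left
      (sub_ne_zero.2 h23)
  have g4 : c + d * (t1 + t2 + t4) = 0 :=
    (mul_eq_zero.1 (show (t2 - t4) * _ = 0 by linear_combination f2 - f4)).resolve_left
      (sub_ne_zero.2 h24)
  have hd : d = 0 :=
    (mul_eq_zero.1 (show (t3 - t4) * _ = 0 by linear_combination g3 - g4)).resolve_left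
      (sub_ne_zero.2 h34)
  subst hd
  have hc : c = 0 := by linear_combination g3
  subst hc
  have hb : b = 0 := by linear_combination f2
  subst hb
  exact ⟨by linear_combination e1, rfl, rfl, rfl⟩

section Stab
variable {k V : Type*} [Field k] [IsAlgClosed k] [AddCommGroup V] [Module k V]
  [FiniteDimensional k V]
variable {T : V →ₗ[k] V →ₗ[k] V →ₗ[k] k} {L : Submodule k V} {b0 b1 z0 z1 : V}

lemma DD_map {g : V →ₗ[k] V} {lam : k} (hg : ∀ x, ff T (g x) = lam * ff T x) (x y : V) :
    DD T (g x) (g y) = lam * DD T x y := by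
  have : ∀ c : k, 0 + (DD T (g x) (g y) - lam * DD T x y) * c
      + (DD T (g y) (g x) - lam * DD T y x) * c ^ 2 = 0 := by
    intro c
    have h := hg (x + c • y)
    rw [map_add, map_smul, ff_add, ff_add, ff_smul, ff_smul, DD_smul_left, DD_smul_right,
      DD_smul_left, DD_smul_right, hg, hg] at h
    linear_combination h
  linear_combination (quad_zero this).2.1

lemma EE_map {g : V →ₗ[k] V} {lam : k} (hg : ∀ x, ff T (g x) = lam * ff T x) (x y z : V) :
    EE T (g x) (g y) (g z) = lam * EE T x y z := by
  have h := DD_map hg (x + y) z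
  rw [map_add, DD_add_left, DD_add_left, DD_map hg, DD_map hg] at h
  linear_combination h

lemma span_two {m : Submodule k V} (hm : Module.finrank k m = 2) {p q : V} (hp : p ∈ m)
    (hq : q ∈ m) (hp0 : p ≠ 0) (hpq : ∀ a : k, a • p ≠ q) (x : V) (hx : x ∈ m) :
    ∃ a b : k, x = a • p + b • q := by
  have hsp : Submodule.span k {p, q} = m := by
    refine Submodule.eq_of_le_of_finrank_eq ?_ ?_
    · rw [Submodule.span_le]
      rintro x (rfl | rfl)
      · exact hp
      · exact hq
    · rw [hm]
      have hli : LinearIndependent k ![p, q] := (LinearIndependent.pair_iff' hp0).2 hpq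
      have := finrank_span_eq_card hli
      rw [Matrix.range_cons, Matrix.range_cons, Matrix.range_empty, Set.union_empty,
        Set.singleton_union] at this
      simpa using this
  rw [← hsp] at hx
  obtain ⟨a, b, h⟩ := Submodule.mem_span_pair.1 hx
  exact ⟨a, b, h.symm⟩

/-- a line `m` in the plane of `L` and `z`, with its point `p` on `L` and a point `l + z`. -/
structure Pt (T : V →ₗ[k] V →ₗ[k] V →ₗ[k] k) (L m : Submodule k V) (z p l : V) : Prop where
  line : IsLine T m
  hz : z ∉ L
  pm : p ∈ m
  pL : p ∈ L
  p0 : p ≠ 0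
  lL : l ∈ L
  lm : l + z ∈ m

lemma exists_Pt (hL : IsLine T L) {m : Submodule k V} {z : V} (hm : IsLine T m) (hz : z ∉ L)
    (hne : m ≠ L) (hle : m ≤ L ⊔ Submodule.span k {z}) : ∃ p l, Pt T L m z p l := by
  have h3 := finrank_plane_le hL z
  have h1 := hm.1
  have h2 := hL.1
  obtain ⟨p, hpm, hpL, hp0⟩ := meets_of_finrank hle (le_sup_left (a := L)) (by omega)
  have hnle : ¬ m ≤ L := fun h => hne (eq_of_le_line hm hL h)
  obtain ⟨w, hwm, hwL⟩ := SetLike.not_le_iff_exists.1 hnle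
  obtain ⟨y, hy, y', hy', rfl⟩ := Submodule.mem_sup.1 (hle hwm)
  obtain ⟨s, rfl⟩ := Submodule.mem_span_singleton.1 hy'
  have hs : s ≠ 0 := by
    rintro rfl
    apply hwL
    simpa using hy
  refine ⟨p, s⁻¹ • y, hm, hz, hpm, hpL, hp0, L.smul_mem _ hy, ?_⟩
  have := m.smul_mem s⁻¹ hwm
  rwa [smul_add, smul_smul, inv_mul_cancel₀ hs, one_smul] at this

lemma Pt.span {m : Submodule k V} {z p l : V} (h : Pt T L m z p l) {x : V} (hx : x ∈ m) :
    ∃ a b : k, x = a • p + b • (l + z) := by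
  refine span_two h.line.1 h.pm h.lm h.p0 (fun a ha => h.hz ?_) x hx
  have : z = a • p - l := by rw [ha]; abel
  rw [this]
  exact L.sub_mem (L.smul_mem _ h.pL) h.lL

lemma Pt.inter {m : Submodule k V} {z p l : V} (h : Pt T L m z p l) {x : V} (hx : x ∈ m)
    (hxL : x ∈ L) : ∃ a : k, x = a • p := by
  obtain ⟨a, b, rfl⟩ := h.span hx
  have hb : b = 0 := by
    by_contra hb
    apply h.hz
    have : z = b⁻¹ • (a • p + b • (l + z)) - (b⁻¹ • (a • p) + l) := by
      rw [smul_add, smul_smul b⁻¹ b, inv_mul_cancel₀ hb, one_smul]; abel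
    rw [this]
    exact L.sub_mem (L.smul_mem _ hxL) (L.add_mem (L.smul_mem _ (L.smul_mem _ h.pL)) h.lL)
  exact ⟨a, by rw [hb, zero_smul, add_zero]⟩

lemma Adapted.not_mem (h : Adapted L b0 b1 z0 z1) (t : k) : z0 + t • z1 ∉ L := fun hz => by
  have := h.memL (u := 0) (v := 0) (s := 1) (t := t) (by simpa using hz)
  exact one_ne_zero this.1

lemma Adapted.memL2 (h : Adapted L b0 b1 z0 z1) {s t : k}
    (hx : s • z0 + t • z1 ∈ L) : s = 0 ∧ t = 0 :=
  h.memL (u := 0) (v := 0) (by simpa using hx)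

/-- vanishing of `DD` on spanning vectors -/
lemma Adapted.sing (hT : Smooth T) (h : Adapted L b0 b1 z0 z1) {p : V} (hf : ff T p = 0)
    (hD : ∀ l ∈ L, DD T p l = 0) (h0 : DD T p z0 = 0) (h1 : DD T p z1 = 0) : p = 0 := by
  refine hT p hf fun w => ?_
  obtain ⟨u, v, s, t, rfl⟩ := h.span w
  simp [DD_add_right, DD_smul_right, h0, h1, hD _ h.mem0, hD _ h.mem1]

lemma Pt.indep (hT : Smooth T) (hL : IsLine T L) (h : Adapted L b0 b1 z0 z1)
    {m1 m2 : Submodule k V} {t1 t2 : k} {p1 p2 l1 l2 : V}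
    (h1 : Pt T L m1 (z0 + t1 • z1) p1 l1) (h2 : Pt T L m2 (z0 + t2 • z1) p2 l2) (h12 : t1 ≠ t2)
    (a : k) : a • p1 ≠ p2 := by
  intro ha
  have hp1 : p2 ∈ m1 := ha ▸ m1.smul_mem a h1.pm
  apply h2.p0
  have e1 := h1.line.DD_eq hp1 h1.lm
  have e2 := h2.line.DD_eq h2.pm h2.lm
  have f1 := hL.DD_eq h2.pL h1.lL
  have f2 := hL.DD_eq h2.pL h2.lL
  rw [DD_add_right, DD_add_right, DD_smul_right] at e1 e2
  have hz1 : DD T p2 z1 = 0 :=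
    (mul_eq_zero.1 (show (t1 - t2) * DD T p2 z1 = 0 by
      linear_combination e1 - e2 - f1 + f2)).resolve_left (sub_ne_zero.2 h12)
  exact h.sing hT (hL.2 _ h2.pL) (fun l hl => hL.DD_eq h2.pL hl)
    (by linear_combination e1 - f1 - t1 * hz1) hz1

lemma three_fixed (hT : Smooth T) (hL : IsLine T L) (h : Adapted L b0 b1 z0 z1)
    {m1 m2 m3 : Submodule k V} {t1 t2 t3 : k} {p1 p2 p3 l1 l2 l3 : V}
    (h1 : Pt T L m1 (z0 + t1 • z1) p1 l1) (h2 : Pt T L m2 (z0 + t2 • z1) p2 l2)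
    (h3 : Pt T L m3 (z0 + t3 • z1) p3 l3) (h12 : t1 ≠ t2) (h13 : t1 ≠ t3) (h23 : t2 ≠ t3)
    {g : V →ₗ[k] V} (gL : ∀ x ∈ L, g x ∈ L) (g1 : ∀ x ∈ m1, g x ∈ m1) (g2 : ∀ x ∈ m2, g x ∈ m2)
    (g3 : ∀ x ∈ m3, g x ∈ m3) :
    ∃ a b : k, (∀ l ∈ L, g l = a • l) ∧ g z0 - b • z0 ∈ L ∧ g z1 - b • z1 ∈ L := by
  obtain ⟨a1, ha1⟩ := h1.inter (g1 _ h1.pm) (gL _ h1.pL)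
  obtain ⟨a2, ha2⟩ := h2.inter (g2 _ h2.pm) (gL _ h2.pL)
  obtain ⟨a3, ha3⟩ := h3.inter (g3 _ h3.pm) (gL _ h3.pL)
  have i12 := Pt.indep hT hL h h1 h2 h12
  have i13 := Pt.indep hT hL h h1 h3 h13
  have i23 := Pt.indep hT hL h h2 h3 h23
  have hli := LinearIndependent.pair_iff.1 ((LinearIndependent.pair_iff' h1.p0).2 i12)
  obtain ⟨x, y, hxy⟩ := span_two hL.1 h1.pL h2.pL h1.p0 i12 p3 h3.pL
  have hx : x ≠ 0 := by
    rintro rfl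
    exact i23 y (by rw [hxy]; simp)
  have hy : y ≠ 0 := by
    rintro rfl
    exact i13 x (by rw [hxy]; simp)
  obtain ⟨e1, e2⟩ := hli (x * (a1 - a3)) (y * (a2 - a3)) (by
    have : g p3 = x • (a1 • p1) + y • (a2 • p2) := by rw [hxy, map_add, map_smul, map_smul, ha1, ha2]
    rw [ha3, ← sub_eq_zero] at this
    nth_rewrite 1 [hxy] at this
    rw [← neg_eq_zero, ← this]
    module)
  have e1' : a1 = a3 := sub_eq_zero.1 ((mul_eq_zero.1 e1).resolve_left hx)
  have e2' : a2 = a3 := sub_eq_zero.1 ((mul_eq_zero.1 e2).resolve_left hy)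
  have key : ∀ {m : Submodule k V} {z p l : V}, Pt T L m z p l → (∀ x ∈ m, g x ∈ m) →
      ∃ b : k, g z - b • z ∈ L := by
    intro m z p l hp hg
    obtain ⟨a, b, hab⟩ := hp.span (hg _ hp.lm)
    refine ⟨b, ?_⟩
    have : g z - b • z = a • p + b • l - g l := by
      rw [map_add] at hab
      rw [eq_sub_of_add_eq' hab]
      module
    rw [this]
    exact L.sub_mem (L.add_mem (L.smul_mem _ hp.pL) (L.smul_mem _ hp.lL)) (gL _ hp.lL)
  obtain ⟨c1, hc1⟩ := key h1 g1
  obtain ⟨c2, hc2⟩ := key h2 g2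
  obtain ⟨c3, hc3⟩ := key h3 g3
  have hcc : (t2 - t3) * (c1 - c3) + (t3 - t1) * (c2 - c3) = 0 ∧
      (t2 - t3) * (c1 - c3) * t1 + (t3 - t1) * (c2 - c3) * t2 = 0 := by
    apply h.memL2
    have : ((t2 - t3) * (c1 - c3) + (t3 - t1) * (c2 - c3)) • z0 +
      ((t2 - t3) * (c1 - c3) * t1 + (t3 - t1) * (c2 - c3) * t2) • z1 =
      (t2 - t1) • (g (z0 + t3 • z1) - c3 • (z0 + t3 • z1))
      - (t2 - t3) • (g (z0 + t1 • z1) - c1 • (z0 + t1 • z1))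
      - (t3 - t1) • (g (z0 + t2 • z1) - c2 • (z0 + t2 • z1)) := by
      simp only [map_add, map_smul]
      module
    rw [this]
    exact L.sub_mem (L.sub_mem (L.smul_mem _ hc3) (L.smul_mem _ hc1)) (L.smul_mem _ hc2)
  obtain ⟨q1, q2⟩ := hcc
  have r1 : c2 = c3 := by
    have : (t2 - t1) * ((t3 - t1) * (c2 - c3)) = 0 := by linear_combination q2 - t1 * q1
    exact sub_eq_zero.1 ((mul_eq_zero.1 ((mul_eq_zero.1 this).resolve_left
      (sub_ne_zero.2 h12.symm))).resolve_left (sub_ne_zero.2 h13.symm))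
  have r2 : c1 = c3 := by
    have : (t1 - t2) * ((t2 - t3) * (c1 - c3)) = 0 := by linear_combination q2 - t2 * q1
    exact sub_eq_zero.1 ((mul_eq_zero.1 ((mul_eq_zero.1 this).resolve_left
      (sub_ne_zero.2 h12))).resolve_left (sub_ne_zero.2 h23))
  subst r1 r2 e1' e2'
  have hz1 : g z1 - c1 • z1 ∈ L := by
    have : g z1 - c1 • z1 = (t1 - t2)⁻¹ • ((g (z0 + t1 • z1) - c1 • (z0 + t1 • z1)) -
        (g (z0 + t2 • z1) - c1 • (z0 + t2 • z1))) := by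
      have e : (g (z0 + t1 • z1) - c1 • (z0 + t1 • z1)) -
        (g (z0 + t2 • z1) - c1 • (z0 + t2 • z1)) = (t1 - t2) • (g z1 - c1 • z1) := by
        simp only [map_add, map_smul]
        module
      rw [e, smul_smul, inv_mul_cancel₀ (sub_ne_zero.2 h12), one_smul]
    rw [this]
    exact L.smul_mem _ (L.sub_mem hc1 hc2)
  refine ⟨a2, c1, fun l hl => ?_, ?_, hz1⟩
  · obtain ⟨u, v, rfl⟩ := span_two hL.1 h1.pL h2.pL h1.p0 i12 l hl
    rw [map_add, map_smul, map_smul, ha1, ha2]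
    module
  · have : g z0 - c1 • z0 = (g (z0 + t1 • z1) - c1 • (z0 + t1 • z1)) - t1 • (g z1 - c1 • z1) := by
      simp only [map_add, map_smul]
      module
    rw [this]
    exact L.sub_mem hc1 (L.smul_mem _ hz1)

lemma fixed_plane {g : V →ₗ[k] V} {a b : k} (ha : ∀ l ∈ L, g l = a • l)
    (hb0 : g z0 - b • z0 ∈ L) (hb1 : g z1 - b • z1 ∈ L) (t : k) (x : V)
    (hx : x ∈ L ⊔ Submodule.span k {z0 + t • z1}) : g x ∈ L ⊔ Submodule.span k {z0 + t • z1} := by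
  obtain ⟨y, hy, y', hy', rfl⟩ := Submodule.mem_sup.1 hx
  obtain ⟨s, rfl⟩ := Submodule.mem_span_singleton.1 hy'
  have : g (y + s • (z0 + t • z1)) = (a • y + s • ((g z0 - b • z0) + t • (g z1 - b • z1)))
    + (s * b) • (z0 + t • z1) := by
    rw [map_add, ha y hy, map_smul, map_add, map_smul]
    module
  rw [this]
  exact Submodule.add_mem_sup (L.add_mem (L.smul_mem _ hy) (L.smul_mem _ (L.add_mem hb0
    (L.smul_mem _ hb1)))) (Submodule.smul_mem _ _ (Submodule.mem_span_singleton_self _))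

lemma four_fixed (hT : Smooth T) (hL : IsLine T L) (h : Adapted L b0 b1 z0 z1)
    {m1 m2 m3 m4 : Submodule k V} {t1 t2 t3 t4 : k} {p1 p2 p3 p4 l1 l2 l3 l4 : V}
    (h1 : Pt T L m1 (z0 + t1 • z1) p1 l1) (h2 : Pt T L m2 (z0 + t2 • z1) p2 l2)
    (h3 : Pt T L m3 (z0 + t3 • z1) p3 l3) (h4 : Pt T L m4 (z0 + t4 • z1) p4 l4)
    (h12 : t1 ≠ t2) (h13 : t1 ≠ t3) (h14 : t1 ≠ t4) (h23 : t2 ≠ t3) (h24 : t2 ≠ t4) (h34 : t3 ≠ t4)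
    {g : V →ₗ[k] V} {lam : k} (hlam : lam ≠ 0) (hg : ∀ x, ff T (g x) = lam * ff T x)
    (gL : ∀ x ∈ L, g x ∈ L) (g1 : ∀ x ∈ m1, g x ∈ m1) (g2 : ∀ x ∈ m2, g x ∈ m2)
    (g3 : ∀ x ∈ m3, g x ∈ m3) (g4 : ∀ x ∈ m4, g x ∈ m4) :
    ∃ c : k, ∀ x, g x = c • x := by
  obtain ⟨a, b, ha, hb0, hb1⟩ := three_fixed hT hL h h1 h2 h3 h12 h13 h23 gL g1 g2 g3
  have hb00 : b0 ≠ 0 := by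
    rintro rfl
    have := h.indep 1 0 0 0 (by simp)
    exact one_ne_zero this.1
  have hz00 : ∀ l ∈ L, z0 + l ≠ 0 := by
    intro l hl h0
    apply h.not_mem 0
    have : z0 + (0 : k) • z1 = - l := by rw [zero_smul, add_zero]; exact eq_neg_of_add_eq_zero_left h0
    rw [this]
    exact L.neg_mem hl
  -- lam
  have key : ∀ l ∈ L, ∀ z : V, g z - b • z ∈ L → (lam - a ^ 2 * b) * DD T l z = 0 := by
    intro l hl z hz
    have e := DD_map hg l z
    have e2 : g z = b • z + (g z - b • z) := by abel
    rw [ha l hl, e2, DD_add_right, DD_smul_right, DD_smul_left, hL.DD_eq (L.smul_mem _ hl) hz] at e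
    linear_combination -e
  have hl : lam = a ^ 2 * b := by
    by_contra hne
    have hne' := sub_ne_zero.2 hne
    exact hb00 (h.sing hT (hL.2 _ h.mem0) (fun l hl => hL.DD_eq h.mem0 hl)
      ((mul_eq_zero.1 (key _ h.mem0 _ hb0)).resolve_left hne')
      ((mul_eq_zero.1 (key _ h.mem0 _ hb1)).resolve_left hne'))
  have ha0 : a ≠ 0 := by rintro rfl; apply hlam; rw [hl]; ring
  have hb' : b ≠ 0 := by rintro rfl; apply hlam; rw [hl]; ring
  set n0 := g z0 - b • z0 with hn0
  set n1 := g z1 - b • z1 with hn1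
  have gz0 : g z0 = b • z0 + n0 := by rw [hn0]; abel
  have gz1 : g z1 = b • z1 + n1 := by rw [hn1]; abel
  -- points on the lines
  have hpt : ∀ {m : Submodule k V} {t : k} {p l : V}, Pt T L m (z0 + t • z1) p l →
      (∀ x ∈ m, g x ∈ m) → (b - a) • (z0 + t • z1) + (n0 + t • n1) ∈ m := by
    intro m t p l hp hgm
    have : (b - a) • (z0 + t • z1) + (n0 + t • n1) =
        g (l + (z0 + t • z1)) - a • (l + (z0 + t • z1)) := by
      rw [map_add, map_add, map_smul, gz0, gz1, ha l hp.lL]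
      module
    rw [this]
    exact m.sub_mem (hgm _ hp.lm) (m.smul_mem _ hp.lm)
  by_cases hab : b = a
  · -- equal eigenvalues
    subst hab
    have E : ∀ z n : V, g z = b • z + n → n ∈ L → ∀ l ∈ L, EE T z n l = 0 := by
      intro z n hz hn l hl'
      have e := DD_map hg z l
      rw [ha l hl', hz, DD_smul_right, DD_add_left, DD_smul_left, hL.DD_eq hn hl', EE_smul_left,
        hl] at e
      have : b ^ 2 * EE T z n l = 0 := by linear_combination e
      exact (mul_eq_zero.1 this).resolve_left (pow_ne_zero 2 ha0)
    have E0 := E z0 n0 gz0 hb0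
    have E1 := E z1 n1 gz1 hb1
    have D : ∀ {m : Submodule k V} {t : k} {p l : V}, Pt T L m (z0 + t • z1) p l →
      (∀ x ∈ m, g x ∈ m) → DD T n0 z0 + DD T n0 z1 * t + DD T n1 z0 * t ^ 2 + DD T n1 z1 * t ^ 3
        = 0 := by
      intro m t p l hp hgm
      have hnm := hpt hp hgm
      rw [sub_self, zero_smul, zero_add] at hnm
      have hnL : n0 + t • n1 ∈ L := L.add_mem hb0 (L.smul_mem _ hb1)
      have e1 := hp.line.DD_eq hnm hp.lm
      rw [DD_add_right, hL.DD_eq hnL hp.lL, DD_add_left, DD_smul_left, EE_smul_mid, DD_add_right,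
        DD_add_right, DD_smul_right, DD_smul_right, EE_add_right, EE_smul_right] at e1
      have e2 := E0 n1 hb1
      have e3 := E1 n0 hb0
      rw [EE_swap, EE_swap'] at e2
      rw [EE_swap', EE_swap, EE_swap'] at e3
      linear_combination e1 - t * e2 - t ^ 2 * e3
    obtain ⟨d1, d2, d3, d4⟩ := cubic_zero h12 h13 h14 h23 h24 h34 (D h1 g1) (D h2 g2) (D h3 g3)
      (D h4 g4)
    have z0' : n0 = 0 := h.sing hT (hL.2 _ hb0) (fun l hl => hL.DD_eq hb0 hl) d1 d2
    have z1' : n1 = 0 := h.sing hT (hL.2 _ hb1) (fun l hl => hL.DD_eq hb1 hl) d3 d4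
    refine ⟨b, fun x => ?_⟩
    obtain ⟨u, v, s, t, rfl⟩ := h.span x
    simp only [map_add, map_smul, gz0, gz1, z0', z1', ha _ h.mem0, ha _ h.mem1]
    module
  · exfalso
    have hba : b - a ≠ 0 := sub_ne_zero.2 hab
    set w0 := z0 + (b - a)⁻¹ • n0 with hw0
    set w1 := z1 + (b - a)⁻¹ • n1 with hw1
    have hgw : ∀ z n : V, g z = b • z + n → n ∈ L →
        g (z + (b - a)⁻¹ • n) = b • (z + (b - a)⁻¹ • n) := by
      intro z n hz hn
      rw [map_add, map_smul, hz, ha n hn]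
      have : n = ((b - a) * (b - a)⁻¹) • n := by rw [mul_inv_cancel₀ hba, one_smul]
      nth_rewrite 1 [this]
      module
    have D : ∀ {m : Submodule k V} {t : k} {p l : V}, Pt T L m (z0 + t • z1) p l →
      (∀ x ∈ m, g x ∈ m) → ff T w0 + DD T w0 w1 * t + DD T w1 w0 * t ^ 2 + ff T w1 * t ^ 3
        = 0 := by
      intro m t p l hp hgm
      have hnm := m.smul_mem (b - a)⁻¹ (hpt hp hgm)
      rw [smul_add, smul_smul, inv_mul_cancel₀ hba, one_smul] at hnm
      have e : z0 + t • z1 + (b - a)⁻¹ • (n0 + t • n1) = w0 + t • w1 := by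
        rw [hw0, hw1]; module
      rw [e] at hnm
      have e1 := hp.line.2 _ hnm
      rw [ff_add, ff_smul, DD_smul_left, DD_smul_right] at e1
      linear_combination e1
    obtain ⟨d1, d2, -, -⟩ := cubic_zero h12 h13 h14 h23 h24 h34 (D h1 g1) (D h2 g2) (D h3 g3)
      (D h4 g4)
    have hDl : ∀ l ∈ L, DD T w0 l = 0 := by
      intro l hl'
      have e := DD_map hg w0 l
      rw [hgw z0 n0 gz0 hb0, ha l hl', DD_smul_left, DD_smul_right, hl] at e
      have : a * b * (b - a) * DD T w0 l = 0 := by linear_combination e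
      exact (mul_eq_zero.1 this).resolve_left (mul_ne_zero (mul_ne_zero ha0 hb') hba)
    refine hz00 _ (L.smul_mem (b - a)⁻¹ hb0) (h.sing hT d1 hDl ?_ ?_)
    · have e := DD_self T w0
      rw [d1] at e
      nth_rewrite 2 [hw0] at e
      rw [DD_add_right, hDl _ (L.smul_mem _ hb0)] at e
      linear_combination e
    · rw [hw1, DD_add_right, hDl _ (L.smul_mem _ hb1)] at d2
      linear_combination d2

end Stab
end CubicSurf


namespace CubicSurf

set_option linter.unusedSectionVars false
set_option linter.unusedSimpArgs false

lemma cover_bound {G X : Type*} [Group G] (S : Subgroup G) (H K : Set G) (orb : G → X) (s : Set X)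
    (hs : s.Finite) {a n : ℕ} (hsa : s.ncard ≤ a) (hH : ∀ g ∈ H, orb g ∈ s)
    (hK : ∀ g ∈ H, ∀ h ∈ H, orb g = orb h → g⁻¹ * h ∈ K)
    (hKf : ((QuotientGroup.mk : G → G ⧸ S) '' K).Finite ∧
      ((QuotientGroup.mk : G → G ⧸ S) '' K).ncard ≤ n) :
    ((QuotientGroup.mk : G → G ⧸ S) '' H).Finite ∧
      ((QuotientGroup.mk : G → G ⧸ S) '' H).ncard ≤ a * n := by
  classical
  have hr : ∀ y : X, ∃ r : G, (∃ g ∈ H, orb g = y) → r ∈ H ∧ orb r = y := by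
    intro y
    by_cases h : ∃ g ∈ H, orb g = y
    · obtain ⟨g, hg⟩ := h
      exact ⟨g, fun _ => hg⟩
    · exact ⟨1, fun h' => absurd h' h⟩
  choose r hr using hr
  have hsub : ((QuotientGroup.mk : G → G ⧸ S) '' H) ⊆
      (fun p : X × (G ⧸ S) => r p.1 • p.2) '' (s ×ˢ ((QuotientGroup.mk : G → G ⧸ S) '' K)) := by
    rintro _ ⟨g, hg, rfl⟩
    obtain ⟨h1, h2⟩ := hr (orb g) ⟨g, hg, rfl⟩
    refine ⟨(orb g, QuotientGroup.mk ((r (orb g))⁻¹ * g)), ⟨hH g hg, _, hK _ h1 _ hg h2, rfl⟩, ?_⟩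
    change ((r (orb g) * ((r (orb g))⁻¹ * g) : G) : G ⧸ S) = _
    rw [mul_inv_cancel_left]
  have hfin := (hs.prod hKf.1).image (fun p : X × (G ⧸ S) => r p.1 • p.2)
  refine ⟨hfin.subset hsub, (Set.ncard_le_ncard hsub hfin).trans ?_⟩
  refine (Set.ncard_image_le (hs.prod hKf.1)).trans ?_
  rw [Set.ncard_prod]
  exact Nat.mul_le_mul hsa hKf.2

section Group
variable {k V : Type*} [Field k] [IsAlgClosed k] [AddCommGroup V] [Module k V]
  [FiniteDimensional k V]
variable {T : V →ₗ[k] V →ₗ[k] V →ₗ[k] k} {L : Submodule k V} {b0 b1 z0 z1 : V}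
variable {G : Type*} [Group G] {ρ : G →* (V →ₗ[k] V)}

lemma rho_inv_apply (ρ : G →* (V →ₗ[k] V)) (g : G) (x : V) : ρ g⁻¹ (ρ g x) = x := by
  rw [← Module.End.mul_apply, ← map_mul, inv_mul_cancel, map_one, Module.End.one_apply]

lemma rho_inj (ρ : G →* (V →ₗ[k] V)) (g : G) : Function.Injective (ρ g) :=
  Function.LeftInverse.injective (rho_inv_apply ρ g)

lemma fix_of_eq {M : Submodule k V} {g h : G} (e : M.map (ρ g) = M.map (ρ h)) :
    M.map (ρ (g⁻¹ * h)) = M := by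
  rw [map_mul, Module.End.mul_eq_comp, Submodule.map_comp, ← e, ← Submodule.map_comp,
    ← Module.End.mul_eq_comp, ← map_mul, inv_mul_cancel, map_one, Module.End.one_eq_id,
    Submodule.map_id]

lemma fix_inv {M : Submodule k V} {g : G} (e : M.map (ρ g) = M) : M.map (ρ g⁻¹) = M := by
  have := fix_of_eq (M := M) (g := g) (h := 1) (ρ := ρ) (by
    rw [e, map_one, Module.End.one_eq_id, Submodule.map_id])
  simpa using this

lemma fix_mem {M : Submodule k V} {g : G} (e : M.map (ρ g) = M) (x : V) (hx : x ∈ M) :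
    ρ g x ∈ M := by
  have : ρ g x ∈ M.map (ρ g) := Submodule.mem_map_of_mem hx
  rwa [e] at this

lemma line_map {M : Submodule k V} (hM : IsLine T M) {g : G} {lam : k}
    (hg : ∀ x, ff T (ρ g x) = lam * ff T x) : IsLine T (M.map (ρ g)) := by
  refine ⟨?_, ?_⟩
  · rw [← hM.1]
    exact (Submodule.equivMapOfInjective _ (rho_inj ρ g) _).finrank_eq.symm
  · rintro _ ⟨x, hx, rfl⟩
    rw [hg, hM.2 x hx, mul_zero]

lemma plane_unique (hL : IsLine T L) (h : Adapted L b0 b1 z0 z1) {M : Submodule k V}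
    (hM : IsLine T M) (hne : M ≠ L) {t t' : k} (h1 : M ≤ L ⊔ Submodule.span k {z0 + t • z1})
    (h2 : M ≤ L ⊔ Submodule.span k {z0 + t' • z1}) : t = t' := by
  obtain ⟨p, l, hp⟩ := exists_Pt hL hM (h.not_mem t) hne h1
  obtain ⟨y, hy, y', hy', e⟩ := Submodule.mem_sup.1 (h2 hp.lm)
  obtain ⟨s, rfl⟩ := Submodule.mem_span_singleton.1 hy'
  obtain ⟨e1, e2⟩ := h.memL2 (s := 1 - s) (t := t - s * t') (by
    have : (1 - s) • z0 + (t - s * t') • z1 = y - l := by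
      rw [← sub_eq_zero] at e ⊢
      rw [← neg_eq_zero, ← e]
      module
    rw [this]
    exact L.sub_mem hy hp.lL)
  linear_combination e2 - t' * e1

/-- the part of the stabilizer fixing `L` and the lines `m s`, `s ∈ S` -/
def HS (ρ : G →* (V →ₗ[k] V)) (H0 : Set G) (L : Submodule k V) (m : k → Submodule k V)
    (S : Finset k) : Set G :=
  {g | g ∈ H0 ∧ L.map (ρ g) = L ∧ ∀ s ∈ S, (m s).map (ρ g) = m s}

variable {R : Finset k} {m m' : k → Submodule k V} {H0 : Set G}

lemma Tri.exists_Pt (hL : IsLine T L) (h : LStr T L b0 b1 z0 z1 R m m') {t : k} (ht : t ∈ R) :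
    ∃ p l, Pt T L (m t) (z0 + t • z1) p l :=
  CubicSurf.exists_Pt hL (h.tri t ht).line (h.adapted.not_mem t) (h.tri t ht).neL (h.tri t ht).le

lemma HS_closed (hmul : ∀ g ∈ H0, ∀ h ∈ H0, g⁻¹ * h ∈ H0) [DecidableEq k] {S : Finset k} {t : k}
    {g h : G} (hg : g ∈ HS ρ H0 L m S) (hh : h ∈ HS ρ H0 L m S)
    (e : (m t).map (ρ g) = (m t).map (ρ h)) : g⁻¹ * h ∈ HS ρ H0 L m (insert t S) := by
  refine ⟨hmul _ hg.1 _ hh.1, fix_of_eq (hg.2.1.trans hh.2.1.symm), fun s hs => ?_⟩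
  rcases Finset.mem_insert.1 hs with rfl | hs
  · exact fix_of_eq e
  · exact fix_of_eq ((hg.2.2 s hs).trans (hh.2.2 s hs).symm)

lemma image_line (hL : IsLine T L) (h : LStr T L b0 b1 z0 z1 R m m')
    (hH0 : ∀ g ∈ H0, ∃ lam : k, lam ≠ 0 ∧ ∀ x, ff T (ρ g x) = lam * ff T x) {S : Finset k}
    {g : G} (hg : g ∈ HS ρ H0 L m S) {t : k} (ht : t ∈ R) :
    IsLine T ((m t).map (ρ g)) ∧ (m t).map (ρ g) ≠ L := by
  obtain ⟨lam, -, hlam⟩ := hH0 g hg.1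
  refine ⟨line_map (h.tri t ht).line hlam, fun e => ?_⟩
  have e' : (m t).map (ρ g) = L.map (ρ g) := e.trans hg.2.1.symm
  exact (h.tri t ht).neL (Submodule.map_injective_of_injective (rho_inj ρ g) e')

lemma step (hL : IsLine T L) (h : LStr T L b0 b1 z0 z1 R m m')
    (hH0 : ∀ g ∈ H0, ∃ lam : k, lam ≠ 0 ∧ ∀ x, ff T (ρ g x) = lam * ff T x)
    (hmul : ∀ g ∈ H0, ∀ h ∈ H0, g⁻¹ * h ∈ H0) [DecidableEq k] (Sc : Subgroup G)
    {S : Finset k} (hS : S ⊆ R) {t : k} (ht : t ∈ R) (htS : t ∉ S) {n : ℕ}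
    (hn : ((QuotientGroup.mk : G → G ⧸ Sc) '' (HS ρ H0 L m (insert t S))).Finite ∧
      ((QuotientGroup.mk : G → G ⧸ Sc) '' (HS ρ H0 L m (insert t S))).ncard ≤ n) :
    ((QuotientGroup.mk : G → G ⧸ Sc) '' (HS ρ H0 L m S)).Finite ∧
      ((QuotientGroup.mk : G → G ⧸ Sc) '' (HS ρ H0 L m S)).ncard ≤ (2 * (5 - S.card)) * n := by
  classical
  refine cover_bound Sc _ _ (fun g => (m t).map (ρ g))
    (((R \ S).image m ∪ (R \ S).image m' : Finset (Submodule k V)) : Set (Submodule k V))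
    (Finset.finite_toSet _) ?_ ?_ (fun g hg g' hg' e => HS_closed hmul hg hg' e) hn
  · rw [Set.ncard_coe_finset]
    have h1 := Finset.card_image_le (s := R \ S) (f := m)
    have h2 := Finset.card_image_le (s := R \ S) (f := m')
    have h3 := Finset.card_union_le ((R \ S).image m) ((R \ S).image m')
    rw [Finset.card_sdiff_of_subset hS, h.card] at h1 h2
    omega
  · intro g hg
    obtain ⟨i1, i2⟩ := image_line hL h hH0 hg ht
    obtain ⟨p, l, hp⟩ := Tri.exists_Pt hL h ht
    obtain ⟨s, hs, hms⟩ := h.all _ i1 i2 ⟨ρ g p, Submodule.mem_map_of_mem hp.pm,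
      fix_mem hg.2.1 p hp.pL, fun h0 => hp.p0 (rho_inj ρ g (h0.trans (map_zero _).symm))⟩
    have hsS : s ∉ S := by
      intro hsS
      have hle : (m t).map (ρ g) ≤ L ⊔ Submodule.span k {z0 + s • z1} := by
        rcases hms with e | e <;> rw [e]
        · exact (h.tri s hs).le
        · exact (h.tri s hs).le'
      obtain ⟨p', l', hp'⟩ := Tri.exists_Pt hL h hs
      have hP : ∀ x ∈ L ⊔ Submodule.span k {z0 + s • z1},
          ρ g⁻¹ x ∈ L ⊔ Submodule.span k {z0 + s • z1} := by
        intro x hx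
        obtain ⟨y, hy, y', hy', rfl⟩ := Submodule.mem_sup.1 hx
        obtain ⟨c, rfl⟩ := Submodule.mem_span_singleton.1 hy'
        have e : y + c • (z0 + s • z1) = (y - c • l') + c • (l' + (z0 + s • z1)) := by module
        rw [e, map_add, map_smul]
        refine Submodule.add_mem _ (Submodule.mem_sup_left (fix_mem (fix_inv hg.2.1) _
          (L.sub_mem hy (L.smul_mem _ hp'.lL)))) (Submodule.smul_mem _ _ ?_)
        exact (h.tri s hs).le (fix_mem (fix_inv (hg.2.2 s hsS)) _ hp'.lm)
      have hle' : m t ≤ L ⊔ Submodule.span k {z0 + s • z1} := by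
        intro x hx
        have := hP _ (hle (Submodule.mem_map_of_mem hx))
        rwa [rho_inv_apply] at this
      have := plane_unique hL h.adapted (h.tri t ht).line (h.tri t ht).neL (h.tri t ht).le hle'
      exact htS (this ▸ hsS)
    have hs' : s ∈ R \ S := Finset.mem_sdiff.2 ⟨hs, hsS⟩
    change (m t).map (ρ g) ∈ (((R \ S).image m ∪ (R \ S).image m' : Finset (Submodule k V)))
    rcases hms with e | e <;> rw [e]
    · exact Finset.mem_union_left _ (Finset.mem_image_of_mem _ hs')
    · exact Finset.mem_union_right _ (Finset.mem_image_of_mem _ hs')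

lemma group_bound (hV : Module.finrank k V = 4) (hT : Smooth T) (hL : IsLine T L)
    (hH0 : ∀ g ∈ H0, ∃ lam : k, lam ≠ 0 ∧ ∀ x, ff T (ρ g x) = lam * ff T x)
    (hmul : ∀ g ∈ H0, ∀ h ∈ H0, g⁻¹ * h ∈ H0) (Sc : Subgroup G)
    (hSc : ∀ g ∈ H0, (∃ c : k, ∀ x, ρ g x = c • x) → g ∈ Sc) :
    ((QuotientGroup.mk : G → G ⧸ Sc) '' H0).Finite ∧
      ((QuotientGroup.mk : G → G ⧸ Sc) '' H0).ncard ≤ 25920 := by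
  classical
  obtain ⟨b0, b1, z0, z1, R, m, m', h⟩ := exists_LStr hV hT hL
  obtain ⟨f, hf⟩ : ∃ f : Fin 5 → k, Function.Injective f ∧ ∀ i, f i ∈ R := by
    let e := (R.equivFinOfCardEq h.card).symm
    exact ⟨fun i => e i, fun i j hij => e.injective (Subtype.ext hij), fun i => (e i).2⟩
  obtain ⟨hfi, hfR⟩ := hf
  have ne : ∀ i j, i ≠ j → f i ≠ f j := fun i j hij e => hij (hfi e)
  obtain ⟨p1, l1, h1⟩ := Tri.exists_Pt hL h (hfR 0)
  obtain ⟨p2, l2, h2⟩ := Tri.exists_Pt hL h (hfR 1)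
  obtain ⟨p3, l3, h3⟩ := Tri.exists_Pt hL h (hfR 2)
  obtain ⟨p4, l4, h4⟩ := Tri.exists_Pt hL h (hfR 3)
  -- the pointwise stabilizer
  have s5 : ((QuotientGroup.mk : G → G ⧸ Sc) ''
      (HS ρ H0 L m (insert (f 3) (insert (f 2) (insert (f 1) (insert (f 0) ∅)))))).Finite ∧
      ((QuotientGroup.mk : G → G ⧸ Sc) ''
      (HS ρ H0 L m (insert (f 3) (insert (f 2) (insert (f 1) (insert (f 0) ∅)))))).ncard ≤ 1 := by
    have hsub : ((QuotientGroup.mk : G → G ⧸ Sc) ''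
      (HS ρ H0 L m (insert (f 3) (insert (f 2) (insert (f 1) (insert (f 0) ∅)))))) ⊆
      {((1 : G) : G ⧸ Sc)} := by
      rintro _ ⟨g, hg, rfl⟩
      obtain ⟨lam, hlam, hgf⟩ := hH0 g hg.1
      have hfx : ∀ i ∈ ({0, 1, 2, 3} : Finset (Fin 5)), ∀ x ∈ m (f i), ρ g x ∈ m (f i) := by
        intro i hi
        refine fix_mem (hg.2.2 _ ?_)
        fin_cases hi <;> simp
      have := hSc g hg.1 (four_fixed hT hL h.adapted h1 h2 h3 h4 (ne _ _ (by decide))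
        (ne _ _ (by decide)) (ne _ _ (by decide)) (ne _ _ (by decide)) (ne _ _ (by decide))
        (ne _ _ (by decide)) hlam hgf (fix_mem hg.2.1) (hfx 0 (by decide)) (hfx 1 (by decide))
        (hfx 2 (by decide)) (hfx 3 (by decide)))
      rw [Set.mem_singleton_iff]
      exact (QuotientGroup.eq.2 (by simpa using this)).symm
    exact ⟨(Set.finite_singleton _).subset hsub,
      (Set.ncard_le_ncard hsub (Set.finite_singleton _)).trans (Set.ncard_singleton _).le⟩
  have s4 : ((QuotientGroup.mk : G → G ⧸ Sc) ''
      (HS ρ H0 L m (insert (f 2) (insert (f 1) (insert (f 0) ∅))))).Finite ∧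
      ((QuotientGroup.mk : G → G ⧸ Sc) ''
      (HS ρ H0 L m (insert (f 2) (insert (f 1) (insert (f 0) ∅))))).ncard ≤ 2 * 1 := by
    refine cover_bound Sc _ _ (fun g => (m (f 3)).map (ρ g))
      ({m (f 3), m' (f 3)} : Set (Submodule k V)) (Set.toFinite _) ((Set.ncard_insert_le _ _).trans (by rw [Set.ncard_singleton])) ?_
      (fun g hg g' hg' e => HS_closed hmul hg hg' e) s5
    intro g hg
    obtain ⟨i1, i2⟩ := image_line hL h hH0 hg (hfR 3)
    have hfx : ∀ i ∈ ({0, 1, 2} : Finset (Fin 5)), ∀ x ∈ m (f i), ρ g x ∈ m (f i) := by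
      intro i hi
      refine fix_mem (hg.2.2 _ ?_)
      fin_cases hi <;> simp
    obtain ⟨a, b, ha, hb0, hb1⟩ := three_fixed hT hL h.adapted h1 h2 h3 (ne _ _ (by decide))
        (ne _ _ (by decide)) (ne _ _ (by decide)) (fix_mem hg.2.1) (hfx 0 (by decide))
        (hfx 1 (by decide)) (hfx 2 (by decide))
    have hle : (m (f 3)).map (ρ g) ≤ L ⊔ Submodule.span k {z0 + f 3 • z1} := by
      rintro _ ⟨x, hx, rfl⟩
      exact fixed_plane ha hb0 hb1 (f 3) x ((h.tri _ (hfR 3)).le hx)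
    exact ((h.tri _ (hfR 3)).eq_of hL i1 hle).resolve_left i2
  have n01 := ne 0 1 (by decide)
  have n02 := ne 0 2 (by decide)
  have n12 := ne 1 2 (by decide)
  have s3 := step hL h hH0 hmul Sc (S := insert (f 1) (insert (f 0) ∅)) (by
    intro x hx
    simp only [Finset.mem_insert, Finset.notMem_empty, or_false] at hx
    rcases hx with rfl | rfl <;> exact hfR _) (hfR 2) (by
    simp only [Finset.mem_insert, Finset.notMem_empty, or_false]
    rintro (h | h)
    · exact n12 h.symm
    · exact n02 h.symm) s4
  have s2 := step hL h hH0 hmul Sc (S := insert (f 0) ∅) (by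
    intro x hx
    simp only [Finset.mem_insert, Finset.notMem_empty, or_false] at hx
    rw [hx]; exact hfR _) (hfR 1) (by
    simp only [Finset.mem_insert, Finset.notMem_empty, or_false]
    exact n01.symm) s3
  have s1 := step hL h hH0 hmul Sc (S := ∅) (Finset.empty_subset _) (hfR 0)
    (Finset.notMem_empty _) s2
  obtain ⟨lf, lc⟩ := lines_le hV hT hL
  have s0 := cover_bound Sc H0 (HS ρ H0 L m ∅) (fun g => L.map (ρ g)) _ lf lc (fun g hg => by
    obtain ⟨lam, -, hgf⟩ := hH0 g hg
    exact line_map hL hgf) (fun g hg g' hg' e => ⟨hmul _ hg _ hg', fix_of_eq e, by simp⟩) s1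
  refine ⟨s0.1, s0.2.trans ?_⟩
  have c1 : (insert (f 0) (∅ : Finset k)).card = 1 := by simp
  have c2 : (insert (f 1) (insert (f 0) (∅ : Finset k))).card = 2 := by
    rw [insert_empty_eq]; exact Finset.card_pair n01.symm
  rw [c1, c2, Finset.card_empty]

end Group
end CubicSurf


namespace CubicSurf

set_option linter.unusedSectionVars false
set_option linter.unusedSimpArgs false

section PS
variable {k : Type*} [Field k]

lemma aeval_congr_mod {n : ℕ} {a b : Fin 4 → PowerSeries k}
    (h : ∀ i, (PowerSeries.X : PowerSeries k) ^ n ∣ a i - b i) (p : MvPolynomial (Fin 4) k) :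
    (PowerSeries.X : PowerSeries k) ^ n ∣ aeval a p - aeval b p := by
  induction p using MvPolynomial.induction_on with
  | C c => simp
  | add p q hp hq =>
    rw [map_add, map_add, add_sub_add_comm]
    exact dvd_add hp hq
  | mul_X p i hp =>
    rw [map_mul, map_mul, aeval_X, aeval_X]
    have : aeval a p * a i - aeval b p * b i =
        (aeval a p - aeval b p) * a i + aeval b p * (a i - b i) := by ring
    rw [this]
    exact dvd_add (hp.mul_right _) ((h i).mul_left _)

lemma fixed_point (E : Fin 4 → MvPolynomial (Fin 4) k) :
    ∃ a : Fin 4 → PowerSeries k, ∀ i, a i = PowerSeries.X * aeval a (E i) := by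
  let s : ℕ → Fin 4 → PowerSeries k := fun n =>
    Nat.rec (fun _ => 0) (fun _ b i => PowerSeries.X * aeval b (E i)) n
  have hs : ∀ n i, s (n + 1) i = PowerSeries.X * aeval (s n) (E i) := fun n i => rfl
  have h1 : ∀ n i, (PowerSeries.X : PowerSeries k) ^ n ∣ s (n + 1) i - s n i := by
    intro n
    induction n with
    | zero => intro i; simp
    | succ n ih =>
      intro i
      rw [hs (n + 1), hs n, ← mul_sub, pow_succ']
      exact mul_dvd_mul_left _ (aeval_congr_mod ih _)
  have h2 : ∀ n j i, (PowerSeries.X : PowerSeries k) ^ n ∣ s (n + j) i - s n i := by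
    intro n j i
    induction j with
    | zero => simp
    | succ j ih =>
      have : s (n + (j + 1)) i - s n i = (s (n + j + 1) i - s (n + j) i) + (s (n + j) i - s n i) := by
        rw [← add_assoc]; ring
      rw [this]
      exact dvd_add ((pow_dvd_pow _ (Nat.le_add_right n j)).trans (h1 (n + j) i)) ih
  let a : Fin 4 → PowerSeries k := fun i => PowerSeries.mk fun n => PowerSeries.coeff n (s (n + 1) i)
  have h3 : ∀ n i, (PowerSeries.X : PowerSeries k) ^ n ∣ a i - s n i := by
    intro n i
    rw [PowerSeries.X_pow_dvd_iff]
    intro d hd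
    have e := PowerSeries.X_pow_dvd_iff.1 (h2 (d + 1) (n - (d + 1)) i) d (Nat.lt_succ_self d)
    rw [Nat.add_sub_cancel' hd, map_sub, sub_eq_zero] at e
    rw [map_sub, e, PowerSeries.coeff_mk, sub_self]
  refine ⟨a, fun i => ?_⟩
  rw [← sub_eq_zero]
  ext n
  have h4 : (PowerSeries.X : PowerSeries k) ^ (n + 1) ∣ a i - PowerSeries.X * aeval a (E i) := by
    have : a i - PowerSeries.X * aeval a (E i) = (a i - s (n + 1) i) -
        PowerSeries.X * (aeval a (E i) - aeval (s n) (E i)) := by rw [hs]; ring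
    rw [this]
    refine dvd_sub (h3 _ _) ?_
    rw [pow_succ']
    exact mul_dvd_mul_left _ (aeval_congr_mod (h3 n) _)
  rw [PowerSeries.X_pow_dvd_iff.1 h4 n (Nat.lt_succ_self n), map_zero]

/-- trilinear expression with coefficients -/
def cc {A : Type*} [CommRing A] (ι : k →+* A) (c : Fin 4 → Fin 4 → Fin 4 → k)
    (x y z : Fin 4 → A) : A :=
  ∑ i, ∑ j, ∑ l, ι (c i j l) * x i * y j * z l

lemma cc_map {A B : Type*} [CommRing A] [CommRing B] (φ : A →+* B) (ι : k →+* A)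
    (c : Fin 4 → Fin 4 → Fin 4 → k) (x y z : Fin 4 → A) :
    φ (cc ι c x y z) = cc (φ.comp ι) c (φ ∘ x) (φ ∘ y) (φ ∘ z) := by
  simp [cc, map_sum]

lemma cc_expand {A : Type*} [CommRing A] (ι : k →+* A) (c : Fin 4 → Fin 4 → Fin 4 → k)
    (P W : Fin 4 → A) (x y : A) :
    cc ι c (x • P + y • W) (x • P + y • W) (x • P + y • W) =
      x ^ 3 * cc ι c P P P + x ^ 2 * y * (cc ι c W P P + cc ι c P W P + cc ι c P P W) +
      x * y ^ 2 * (cc ι c P W W + cc ι c W P W + cc ι c W W P) + y ^ 3 * cc ι c W W W := by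
  simp only [cc, Pi.add_apply, Pi.smul_apply, smul_eq_mul, Finset.mul_sum, ← Finset.sum_add_distrib]
  refine Finset.sum_congr rfl fun i _ => Finset.sum_congr rfl fun j _ =>
    Finset.sum_congr rfl fun l _ => ?_
  ring

lemma ps_line (c : Fin 4 → Fin 4 → Fin 4 → k) :
    ∃ P W : Fin 4 → PowerSeries k, (P 0 = 1 ∧ P 1 = 0 ∧ W 0 = 0 ∧ W 1 = 1) ∧
      ∀ {A : Type _} [CommRing A] (φ : PowerSeries k →+* A) (x y : A),
      let v : Fin 4 → A := x • (φ ∘ P) + y • (φ ∘ W)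
      (v 2 * v 0 ^ 2 + v 3 * v 1 ^ 2) + φ PowerSeries.X *
        cc (φ.comp PowerSeries.C) c v v v = 0 := by
  let Pg : Fin 4 → MvPolynomial (Fin 4) k := ![1, 0, X 0, X 2]
  let Wg : Fin 4 → MvPolynomial (Fin 4) k := ![0, 1, X 1, X 3]
  let Q : ∀ {A : Type _} [CommRing A] (ι : k →+* A) (P W : Fin 4 → A), Fin 4 → A :=
    fun ι P W => ![cc ι c P P P, cc ι c W P P + cc ι c P W P + cc ι c P P W,
      cc ι c P W W + cc ι c W P W + cc ι c W W P, cc ι c W W W]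
  obtain ⟨a, ha⟩ := fixed_point (fun i => - Q C Pg Wg i)
  have hP : (aeval a : MvPolynomial (Fin 4) k →ₐ[k] PowerSeries k).toRingHom ∘ Pg =
      ![1, 0, a 0, a 2] := by
    ext i : 1; fin_cases i <;> simp [Pg]
  have hW : (aeval a : MvPolynomial (Fin 4) k →ₐ[k] PowerSeries k).toRingHom ∘ Wg =
      ![0, 1, a 1, a 3] := by
    ext i : 1; fin_cases i <;> simp [Wg]
  have hC : (aeval a : MvPolynomial (Fin 4) k →ₐ[k] PowerSeries k).toRingHom.comp C =
      PowerSeries.C := by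
    ext r : 1
    simp [PowerSeries.algebraMap_apply]
  have hcc : ∀ x y z, aeval a (cc C c x y z) = cc PowerSeries.C c
    ((aeval a : MvPolynomial (Fin 4) k →ₐ[k] PowerSeries k).toRingHom ∘ x)
    ((aeval a : MvPolynomial (Fin 4) k →ₐ[k] PowerSeries k).toRingHom ∘ y)
    ((aeval a : MvPolynomial (Fin 4) k →ₐ[k] PowerSeries k).toRingHom ∘ z) := by
    intro x y z
    have := cc_map (aeval a : MvPolynomial (Fin 4) k →ₐ[k] PowerSeries k).toRingHom C c x y z
    rw [hC] at this
    exact this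
  have e0 := ha 0
  have e1 := ha 1
  have e2 := ha 2
  have e3 := ha 3
  simp only [Q, Fin.isValue, Matrix.cons_val, map_neg, map_add, hcc, hP, hW] at e0 e1 e2 e3
  refine ⟨![1, 0, a 0, a 2], ![0, 1, a 1, a 3], ⟨rfl, rfl, rfl, rfl⟩, ?_⟩
  intro A _ φ x y v
  set P := ![1, 0, a 0, a 2]
  set W := ![0, 1, a 1, a 3]
  have hv : ∀ i, v i = x * φ (P i) + y * φ (W i) := fun i => rfl
  have v0 : v 0 = x := by rw [hv]; simp [P, W]
  have v1 : v 1 = y := by rw [hv]; simp [P, W]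
  have v2 : v 2 = x * φ (a 0) + y * φ (a 1) := by rw [hv]; simp [P, W]
  have v3 : v 3 = x * φ (a 2) + y * φ (a 3) := by rw [hv]; simp [P, W]
  rw [v0, v1, v2, v3]
  have := cc_expand (φ.comp PowerSeries.C) c (φ ∘ P) (φ ∘ W) x y
  change cc (φ.comp PowerSeries.C) c v v v = _ at this
  rw [this]
  simp only [← cc_map]
  apply_fun φ at e0 e1 e2 e3
  simp only [map_mul, map_neg, map_add] at e0 e1 e2 e3
  linear_combination x ^ 3 * e0 + x ^ 2 * y * e1 + x * y ^ 2 * e2 + y ^ 3 * e3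

end PS
end CubicSurf


namespace CubicSurf

set_option linter.unusedSectionVars false
set_option linter.unusedSimpArgs false

section Ex
variable {k : Type*} [Field k] [IsAlgClosed k]

/-- the pair of vectors has an identity block in columns `i`, `j` -/
def Block {A : Type*} [CommRing A] (P W : Fin 4 → A) (i j : Fin 4) : Prop :=
  P i = 1 ∧ P j = 0 ∧ W i = 0 ∧ W j = 1

lemma descend {κ : Type*} [Field κ] (ι : k →+* κ) (c : Fin 4 → Fin 4 → Fin 4 → k)
    (P W : Fin 4 → κ) (i j : Fin 4) (hb : Block P W i j)
    (h : ∀ x y : k, cc ι c (ι x • P + ι y • W) (ι x • P + ι y • W) (ι x • P + ι y • W) = 0) :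
    ∃ P W : Fin 4 → k, Block P W i j ∧
      ∀ x y : k, cc (RingHom.id k) c (x • P + y • W) (x • P + y • W) (x • P + y • W) = 0 := by
  let vals : Fin 2 × Fin 4 → κ := fun p => if p.1 = 0 then P p.2 else W p.2
  let Ψ : MvPolynomial (Fin 2 × Fin 4) k →+* κ := eval₂Hom ι vals
  let PX : Fin 4 → MvPolynomial (Fin 2 × Fin 4) k := fun i => X (0, i)
  let WX : Fin 4 → MvPolynomial (Fin 2 × Fin 4) k := fun i => X (1, i)
  have hPX : ∀ i, Ψ (PX i) = P i := by intro i; simp [Ψ, PX, vals]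
  have hWX : ∀ i, Ψ (WX i) = W i := by intro i; simp [Ψ, WX, vals]
  have hC : ∀ r, Ψ (C r) = ι r := by intro r; simp [Ψ]
  obtain ⟨M, hM, hle⟩ := Ideal.exists_le_maximal (RingHom.ker Ψ) (RingHom.ker_ne_top Ψ)
  obtain ⟨pt, hpt⟩ := isMaximal_iff_eq_vanishingIdeal_singleton.1 hM
  have key : ∀ p, Ψ p = 0 → eval pt p = 0 := by
    intro p hp
    have : p ∈ M := hle hp
    rw [hpt, mem_vanishingIdeal_singleton_iff] at this
    simpa [aeval_eq_eval] using this
  refine ⟨fun i => pt (0, i), fun i => pt (1, i), ⟨?_, ?_, ?_, ?_⟩, fun x y => ?_⟩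
  · have := key (PX i - 1) (by rw [map_sub, hPX, hb.1, map_one, sub_self])
    simpa [PX, sub_eq_zero] using this
  · have := key (PX j) (by rw [hPX, hb.2.1])
    simpa [PX] using this
  · have := key (WX i) (by rw [hWX, hb.2.2.1])
    simpa [WX] using this
  · have := key (WX j - 1) (by rw [map_sub, hWX, hb.2.2.2, map_one, sub_self])
    simpa [WX, sub_eq_zero] using this
  · let v : Fin 4 → MvPolynomial (Fin 2 × Fin 4) k := fun l => C x * PX l + C y * WX l
    have := key (cc C c v v v) (by
      rw [cc_map]
      have e1 : Ψ.comp C = ι := by ext r; exact hC r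
      have e2 : Ψ ∘ v = ι x • P + ι y • W := by
        ext l
        simp only [v, Function.comp_apply, Pi.add_apply, Pi.smul_apply, smul_eq_mul, map_add, map_mul,
          hC, hPX, hWX]
      rw [e1, e2]
      exact h x y)
    rw [cc_map] at this
    have e1 : (eval pt).comp C = RingHom.id k := by ext r; simp
    have e2 : (eval pt) ∘ v =
        (x • fun i => pt (0, i)) + y • fun i => pt (1, i) := by
      ext l
      simp [v, PX, WX]
    rw [e1, e2] at this
    exact this

lemma exists_valuation {K : Type*} [Field K] [Algebra k K] {x : K}
    (hx : x ∉ (algebraMap k K).range) :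
    ∃ O : ValuationSubring K, (∀ r : k, algebraMap k K r ∈ O) ∧ x ∉ O := by
  let R : Subring K := (⊥ : Subalgebra k K).toSubring
  have hR : ∀ y : K, y ∈ R ↔ y ∈ (algebraMap k K).range := by
    intro y
    change y ∈ (⊥ : Subalgebra k K) ↔ _
    rw [Algebra.mem_bot]; rfl
  have hcl : IsIntegrallyClosedIn R K := by
    rw [isIntegrallyClosedIn_iff]
    refine ⟨Subtype.val_injective, fun {y} hy => ?_⟩
    have hy' : IsIntegral (⊥ : Subalgebra k K) y := hy
    have hy2 : IsIntegral k y := by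
      have : Algebra.IsIntegral k (⊥ : Subalgebra k K) := ⟨fun z => by
        obtain ⟨r, hr⟩ := Algebra.mem_bot.1 z.2
        have : z = algebraMap k _ r := Subtype.ext hr.symm
        rw [this]
        exact isIntegral_algebraMap⟩
      exact isIntegral_trans y hy'
    have hd := IsAlgClosed.degree_eq_one_of_irreducible k (minpoly.irreducible hy2)
    have := minpoly.mem_range_of_degree_eq_one k y hd
    exact ⟨⟨y, (hR y).2 this⟩, rfl⟩
  obtain ⟨O, hO, hxO⟩ := Subring.exists_le_valuationSubring_of_isIntegrallyClosedIn (R := R)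
    (x := x) (fun h => hx ((hR x).1 h))
  exact ⟨O, fun r => hO ((hR _).2 ⟨r, rfl⟩), hxO⟩

lemma normalize {K : Type*} [Field K] (O : ValuationSubring K) (P W : Fin 4 → K)
    (hPW : Block P W 0 1) : ∃ (i j : Fin 4) (P' W' : Fin 4 → O) (a b c d : K),
      Block P' W' i j ∧ ((↑) ∘ P' : Fin 4 → K) = a • P + b • W ∧
        ((↑) ∘ W' : Fin 4 → K) = c • P + d • W := by
  let dd : Fin 4 × Fin 4 → K := fun p => P p.1 * W p.2 - P p.2 * W p.1
  obtain ⟨⟨i, j⟩, -, hmax⟩ := Finset.exists_max_image Finset.univ (fun p => O.valuation (dd p))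
    Finset.univ_nonempty
  have h01 : dd (0, 1) = 1 := by
    obtain ⟨h1, h2, h3, h4⟩ := hPW
    simp [dd, h1, h2, h3, h4]
  have hd : dd (i, j) ≠ 0 := by
    intro h0
    have := hmax (0, 1) (Finset.mem_univ _)
    rw [h0, h01, map_zero, map_one] at this
    exact absurd this (by simp)
  have hmem : ∀ p, dd p / dd (i, j) ∈ O := by
    intro p
    rw [← O.valuation_le_one_iff, map_div₀]
    exact div_le_one_of_le₀ (hmax p (Finset.mem_univ _)) zero_le
  have hd' : P i * W j - P j * W i ≠ 0 := hd
  refine ⟨i, j, fun l => ⟨_, hmem (l, j)⟩, fun l => ⟨_, hmem (i, l)⟩, W j / dd (i, j),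
    - P j / dd (i, j), - W i / dd (i, j), P i / dd (i, j), ⟨?_, ?_, ?_, ?_⟩, ?_, ?_⟩
  · exact Subtype.ext (div_self hd)
  · refine Subtype.ext ?_
    simp [dd]
  · refine Subtype.ext ?_
    simp [dd]
  · exact Subtype.ext (div_self hd)
  · ext l
    simp only [Function.comp_apply, Pi.add_apply, Pi.smul_apply, smul_eq_mul, dd]
    field_simp
    ring
  · ext l
    simp only [Function.comp_apply, Pi.add_apply, Pi.smul_apply, smul_eq_mul, dd]
    field_simp
    ring

lemma exists_line_array (c : Fin 4 → Fin 4 → Fin 4 → k) :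
    ∃ (P W : Fin 4 → k) (i j : Fin 4), Block P W i j ∧
      ∀ x y : k, cc (RingHom.id k) c (x • P + y • W) (x • P + y • W) (x • P + y • W) = 0 := by
  obtain ⟨P, W, hPW, h⟩ := ps_line c
  let K := FractionRing (PowerSeries k)
  let φ : PowerSeries k →+* K := algebraMap _ K
  have hφ : Function.Injective φ := IsFractionRing.injective _ _
  let ι : k →+* K := φ.comp PowerSeries.C
  let _ : Algebra k K := ι.toAlgebra
  have hX : φ PowerSeries.X ∉ (algebraMap k K).range := by
    rintro ⟨r, hr⟩
    have h1 : (PowerSeries.C r : PowerSeries k) = PowerSeries.X := hφ hr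
    have := congrArg (PowerSeries.coeff 1) h1
    simp [PowerSeries.coeff_C] at this
  obtain ⟨O, hO, hXO⟩ := exists_valuation hX
  have hX0 : φ PowerSeries.X ≠ 0 := fun h0 => hXO (h0 ▸ O.zero_mem)
  have hεm : (φ PowerSeries.X)⁻¹ ∈ O := (O.mem_or_inv_mem _).resolve_left hXO
  let ε : O := ⟨(φ PowerSeries.X)⁻¹, hεm⟩
  have hε : IsLocalRing.residue O ε = 0 := by
    rw [IsLocalRing.residue_eq_zero_iff, IsLocalRing.mem_maximalIdeal, mem_nonunits_iff]
    intro hu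
    obtain ⟨u, hu⟩ := hu.exists_right_inv
    apply hXO
    have h1 : (φ PowerSeries.X)⁻¹ * (u : K) = 1 := congrArg Subtype.val hu
    have h2 : φ PowerSeries.X = u := by
      rwa [inv_mul_eq_one₀ hX0] at h1
    rw [h2]
    exact u.2
  obtain ⟨i, j, P', W', a, b, c', d, hb, hP', hW'⟩ := normalize O (φ ∘ P) (φ ∘ W) (by
    obtain ⟨h1, h2, h3, h4⟩ := hPW
    simp [Block, h1, h2, h3, h4])
  let ιO : k →+* O := ι.codRestrict O.toSubring hO
  let ρ := IsLocalRing.residue O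
  obtain ⟨P2, W2, hb2, h2⟩ := descend (ρ.comp ιO) c (ρ ∘ P') (ρ ∘ W') i j (by
    obtain ⟨h1, h2, h3, h4⟩ := hb
    simp [Block, h1, h2, h3, h4]) (by
    intro x y
    let v : Fin 4 → O := ιO x • P' + ιO y • W'
    have e1 : ρ.comp ιO x • (ρ ∘ P') + ρ.comp ιO y • (ρ ∘ W') = ρ ∘ v := by
      ext l; simp [v]
    rw [e1, ← cc_map]
    have hv : O.subtype ∘ v = (ι x * a + ι y * c') • (φ ∘ P) + (ι x * b + ι y * d) • (φ ∘ W) := by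
      have : O.subtype ∘ v = ι x • ((↑) ∘ P' : Fin 4 → K) + ι y • ((↑) ∘ W' : Fin 4 → K) := by
        ext l; rfl
      rw [this, hP', hW']
      ext l
      simp only [Pi.add_apply, Pi.smul_apply, smul_eq_mul]
      ring
    have h3 := h φ (ι x * a + ι y * c') (ι x * b + ι y * d)
    rw [← hv] at h3
    have h4 : cc ιO c v v v + ε * (v 2 * v 0 ^ 2 + v 3 * v 1 ^ 2) = 0 := by
      apply Subtype.val_injective
      have h5 := cc_map O.subtype ιO c v v v
      have e2 : O.subtype.comp ιO = ι := by ext r; rfl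
      rw [e2] at h5
      change ((cc ιO c v v v : O) : K) + (φ PowerSeries.X)⁻¹ * ((v 2 : K) * (v 0 : K) ^ 2 +
        (v 3 : K) * (v 1 : K) ^ 2) = 0
      change ((cc ιO c v v v : O) : K) = _ at h5
      rw [h5]
      change ((v 2 : K) * (v 0 : K) ^ 2 + (v 3 : K) * (v 1 : K) ^ 2) + φ PowerSeries.X *
        cc ι c (O.subtype ∘ v) (O.subtype ∘ v) (O.subtype ∘ v) = 0 at h3
      rw [eq_neg_of_add_eq_zero_left h3]
      rw [mul_neg, inv_mul_cancel_left₀ hX0, add_neg_cancel]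
    have h6 := congrArg ρ h4
    rw [map_add, map_mul, hε, zero_mul, add_zero, map_zero] at h6
    exact h6)
  exact ⟨P2, W2, i, j, hb2, h2⟩

end Ex
end CubicSurf


namespace CubicSurf

section Final
variable {k : Type*} [Field k]

/-- the trilinear form of a coefficient array -/
noncomputable def tri (c : Fin 4 → Fin 4 → Fin 4 → k) :
    (Fin 4 → k) →ₗ[k] (Fin 4 → k) →ₗ[k] (Fin 4 → k) →ₗ[k] k :=
  ∑ i, ∑ j, ∑ l, (LinearMap.proj i : (Fin 4 → k) →ₗ[k] k).smulRight
    ((LinearMap.proj j : (Fin 4 → k) →ₗ[k] k).smulRight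
      (c i j l • (LinearMap.proj l : (Fin 4 → k) →ₗ[k] k)))

lemma tri_apply (c : Fin 4 → Fin 4 → Fin 4 → k) (x y z : Fin 4 → k) :
    tri c x y z = cc (RingHom.id k) c x y z := by
  simp only [tri, cc, LinearMap.sum_apply, LinearMap.smulRight_apply, LinearMap.smul_apply,
    LinearMap.proj_apply, smul_eq_mul, RingHom.id_apply]
  refine Finset.sum_congr rfl fun i _ => Finset.sum_congr rfl fun j _ =>
    Finset.sum_congr rfl fun l _ => ?_
  ring

/-- the cubic polynomial of a coefficient array -/
noncomputable def cub (c : Fin 4 → Fin 4 → Fin 4 → k) : MvPolynomial (Fin 4) k :=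
  ∑ i, ∑ j, ∑ l, C (c i j l) * X i * X j * X l

lemma exists_cub (F : MvPolynomial (Fin 4) k) (hF : F.IsHomogeneous 3) : ∃ c, F = cub c := by
  classical
  rw [F.as_sum]
  refine Finset.sum_induction _ (fun G => ∃ c, G = cub c) ?_ ?_ ?_
  · rintro _ _ ⟨c, rfl⟩ ⟨c', rfl⟩
    refine ⟨c + c', ?_⟩
    simp only [cub, ← Finset.sum_add_distrib, Pi.add_apply, map_add, add_mul]
  · exact ⟨0, by simp [cub]⟩
  · intro d hd
    have hdeg : d.degree = 3 := by
      have := hF (mem_support_iff.1 hd)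
      rwa [Finsupp.degree_eq_weight_one]
    have hcard : Multiset.card (Finsupp.toMultiset d) = 3 := by
      rw [Finsupp.card_toMultiset]; exact hdeg
    obtain ⟨a, b, e, h⟩ := Multiset.card_eq_three.1 hcard
    have hd2 : d = Finsupp.single a 1 + Finsupp.single b 1 + Finsupp.single e 1 := by
      apply Multiset.toFinsupp.symm.injective
      change Finsupp.toMultiset d = Finsupp.toMultiset _
      rw [h, map_add, map_add]
      simp [Finsupp.toMultiset_single]
    refine ⟨fun i j l => if i = a then if j = b then if l = e then coeff d F else 0 else 0 else 0,
      ?_⟩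
    simp only [cub, apply_ite C, map_zero, ite_mul, zero_mul, Finset.sum_ite_eq', Finset.mem_univ,
      if_true, Finset.sum_const_zero, Finset.sum_ite_irrel]
    generalize coeff d F = r
    rw [hd2, X, X, X, C_mul_monomial, monomial_mul, monomial_mul]
    simp

lemma eval_cub (c : Fin 4 → Fin 4 → Fin 4 → k) (x : Fin 4 → k) :
    eval x (cub c) = ff (tri c) x := by
  rw [ff, tri_apply]
  simp [cub, cc]

lemma eval_pderiv_cub (c : Fin 4 → Fin 4 → Fin 4 → k) (x w : Fin 4 → k) :
    DD (tri c) x w = ∑ m, w m * eval x (pderiv m (cub c)) := by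
  have h : ∀ (u v y : Fin 4 → k), tri c u v y = ∑ i, ∑ j, ∑ l, c i j l * u i * v j * y l := by
    intro u v y; rw [tri_apply]; rfl
  have h2 : ∀ i j l : Fin 4, ∑ m, w m * eval x (pderiv m (C (c i j l) * X i * X j * X l)) =
      c i j l * w i * x j * x l + c i j l * x i * w j * x l + c i j l * x i * x j * w l := by
    intro i j l
    have e : ∀ m, w m * eval x (pderiv m (C (c i j l) * X i * X j * X l)) =
        w m * (Pi.single i (1 : k) : Fin 4 → k) m * (c i j l * x j * x l) +
        w m * (Pi.single j (1 : k) : Fin 4 → k) m * (c i j l * x i * x l) +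
        w m * (Pi.single l (1 : k) : Fin 4 → k) m * (c i j l * x i * x j) := by
      intro m
      have e1 : ∀ n : Fin 4, eval x (pderiv m (X n : MvPolynomial (Fin 4) k)) =
          (Pi.single n (1 : k) : Fin 4 → k) m := by
        intro n
        rw [pderiv_X]
        simp only [Pi.single_apply, eq_comm (a := n)]
        split_ifs <;> simp
      simp only [pderiv_mul, pderiv_C, map_add, map_mul, e1, eval_X, eval_C, map_zero]
      ring
    simp only [e, Finset.sum_add_distrib, ← Finset.sum_mul]
    simp only [Pi.single_apply, mul_ite, mul_one, mul_zero, Finset.sum_ite_eq', Finset.mem_univ,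
      if_true]
    ring
  have h3 : ∑ m, w m * eval x (pderiv m (cub c)) =
      ∑ i, ∑ j, ∑ l, ∑ m, w m * eval x (pderiv m (C (c i j l) * X i * X j * X l)) := by
    simp only [cub, map_sum, Finset.mul_sum]
    rw [Finset.sum_comm]
    refine Finset.sum_congr rfl fun i _ => ?_
    rw [Finset.sum_comm]
    refine Finset.sum_congr rfl fun j _ => ?_
    rw [Finset.sum_comm]
  rw [h3, DD, h, h, h]
  simp only [h2, Finset.sum_add_distrib]

lemma smooth_tri (c : Fin 4 → Fin 4 → Fin 4 → k)
    (h : ∀ x : Fin 4 → k, eval x (cub c) = 0 → (∀ i, eval x (pderiv i (cub c)) = 0) → x = 0) :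
    Smooth (tri c) := by
  intro p hp hd
  refine h p (by rw [eval_cub, hp]) fun i => ?_
  have := hd (Pi.single i 1)
  rw [eval_pderiv_cub] at this
  simpa [Pi.single_apply] using this

lemma exists_isLine [IsAlgClosed k] (c : Fin 4 → Fin 4 → Fin 4 → k) :
    ∃ L, IsLine (tri c) L := by
  obtain ⟨P, W, i, j, hb, h⟩ := exists_line_array c
  refine ⟨Submodule.span k {P, W}, ?_, ?_⟩
  · have hli : LinearIndependent k ![P, W] := by
      rw [LinearIndependent.pair_iff]
      intro s t hst
      have h1 := congrFun hst i
      have h2 := congrFun hst j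
      simp only [Pi.add_apply, Pi.smul_apply, hb.1, hb.2.1, hb.2.2.1, hb.2.2.2, smul_eq_mul,
        mul_one, mul_zero, add_zero, zero_add, Pi.zero_apply] at h1 h2
      exact ⟨h1, h2⟩
    have := finrank_span_eq_card hli
    rw [Matrix.range_cons_cons_empty] at this
    simpa using this
  · intro x hx
    obtain ⟨a, b, rfl⟩ := Submodule.mem_span_pair.1 hx
    rw [ff, tri_apply]
    exact h a b

lemma eval_substMatrix (A : Matrix (Fin 4) (Fin 4) k) (F : MvPolynomial (Fin 4) k)
    (x : Fin 4 → k) : eval x (substMatrix A F) = eval (A *ᵥ x) F := by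
  rw [substMatrix, aeval_def, eval₂_eq_eval_map, ← coe_aeval_eq_eval]
  induction F using MvPolynomial.induction_on with
  | C c => simp
  | add p q hp hq => simp only [map_add] at *; rw [hp, hq]
  | mul_X p i hp =>
    simp only [map_mul] at *
    rw [hp]
    simp [Matrix.mulVec, dotProduct]

lemma leavesInvariant_iff [Infinite k] (A : Matrix (Fin 4) (Fin 4) k)
    (F : MvPolynomial (Fin 4) k) :
    LeavesInvariant A F ↔ ∃ lam : k, lam ≠ 0 ∧ ∀ x, eval (A *ᵥ x) F = lam * eval x F := by
  constructor
  · rintro ⟨lam, h⟩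
    refine ⟨lam, lam.ne_zero, fun x => ?_⟩
    rw [← eval_substMatrix, h, smul_eval]
  · rintro ⟨lam, h0, h⟩
    refine ⟨Units.mk0 lam h0, MvPolynomial.funext fun x => ?_⟩
    rw [eval_substMatrix, h, smul_eval]; rfl

/-- the standard representation of `GL₄` -/
noncomputable def stdRep : GL (Fin 4) k →* ((Fin 4 → k) →ₗ[k] (Fin 4 → k)) :=
  ((Matrix.toLinAlgEquiv' : Matrix (Fin 4) (Fin 4) k ≃ₐ[k] _).toRingEquiv.toMonoidHom).comp
    (Units.coeHom _)

lemma stdRep_apply (g : GL (Fin 4) k) (x : Fin 4 → k) :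
    stdRep g x = (g : Matrix (Fin 4) (Fin 4) k) *ᵥ x := rfl

end Final
end CubicSurf

open CubicSurf

/-- The stabilizer of a smooth cubic surface in `PGL₄(k)` is a
finite group of cardinality at most `25920`. -/
theorem stmt0 {k : Type*} [Field k] [IsAlgClosed k]
    (F : MvPolynomial (Fin 4) k) (hF0 : F ≠ 0) (hhom : F.IsHomogeneous 3)
    (hsmooth : ∀ x : Fin 4 → k,
      eval x F = 0 → (∀ i, eval x (pderiv i F) = 0) → x = 0) :
    ((QuotientGroup.mk :
        GL (Fin 4) k → GL (Fin 4) k ⧸ scalarSubgroup k) ''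
        {A : GL (Fin 4) k | LeavesInvariant (A : Matrix (Fin 4) (Fin 4) k) F}).Finite ∧
    ((QuotientGroup.mk :
        GL (Fin 4) k → GL (Fin 4) k ⧸ scalarSubgroup k) ''
        {A : GL (Fin 4) k | LeavesInvariant (A : Matrix (Fin 4) (Fin 4) k) F}).ncard
      ≤ 25920 := by
  have : Infinite k := IsAlgClosed.instInfinite
  obtain ⟨c, rfl⟩ := exists_cub F hhom
  obtain ⟨L, hL⟩ := exists_isLine c
  refine group_bound (ρ := stdRep) (T := tri c) (by simp) (smooth_tri c hsmooth) hL ?_ ?_ _ ?_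
  · intro g hg
    obtain ⟨lam, h0, h⟩ := (leavesInvariant_iff _ _).1 hg
    exact ⟨lam, h0, fun x => by rw [stdRep_apply, ← eval_cub, ← eval_cub, h]⟩
  · intro g hg h hh
    obtain ⟨lam, l0, hl⟩ := (leavesInvariant_iff _ _).1 hg
    obtain ⟨mu, m0, hm⟩ := (leavesInvariant_iff _ _).1 hh
    refine (leavesInvariant_iff _ _).2 ⟨lam⁻¹ * mu, mul_ne_zero (inv_ne_zero l0) m0, fun x => ?_⟩
    have h1 := hl (((g⁻¹ * h : GL (Fin 4) k) : Matrix (Fin 4) (Fin 4) k) *ᵥ x)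
    rw [Matrix.mulVec_mulVec, ← Units.val_mul, mul_inv_cancel_left, hm] at h1
    rw [mul_assoc, h1, inv_mul_cancel_left₀ l0]
  · rintro g - ⟨r, hr⟩
    have hg : (g : Matrix (Fin 4) (Fin 4) k) = algebraMap k _ r := by
      apply Matrix.toLin'.injective
      ext1 i
      ext1
      have := hr (Pi.single i 1)
      rw [stdRep_apply] at this
      simpa [Algebra.algebraMap_eq_smul_one, Matrix.smul_mulVec] using this
    have hr0 : r ≠ 0 := by
      rintro rfl
      rw [map_zero] at hg
      exact g.ne_zero hg
    exact ⟨Units.mk0 r hr0, Units.ext hg.symm⟩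
end

section
/- Let F be a nonzero homogeneous polynomial of degree 3 in k[x₀,x₁,x₂,x₃] such that the cubic surface V(F) is smooth, and let p be a point of ℙ³(k). Then p is an Eckardt point of V(F) if and only if there exists a reflection A ∈ GL₄(k) leaving V(F) invariant whose center is p. -/
open MvPolynomial Matrix

/-- `F` vanishes identically on the linear subspace `W ⊆ k⁴`. -/
def VanishesOn {k : Type*} [Field k] (F : MvPolynomial (Fin 4) k)
    (W : Submodule k (Fin 4 → k)) : Prop :=
  ∀ x ∈ W, eval x F = 0

/-- `W` is (the cone over) a projective line contained in the surface `V(F)`. -/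
def IsLineIn {k : Type*} [Field k] (F : MvPolynomial (Fin 4) k)
    (W : Submodule k (Fin 4 → k)) : Prop :=
  Module.finrank k W = 2 ∧ VanishesOn F W

/-- `L`, a 1-dimensional subspace of `k⁴` regarded as a point of `ℙ³(k)`, is an
Eckardt point of `V(F)`: at least three distinct projective lines contained in
`V(F)` pass through it. -/
def IsEckardtPoint {k : Type*} [Field k] (F : MvPolynomial (Fin 4) k)
    (L : Submodule k (Fin 4 → k)) : Prop :=
  Module.finrank k L = 1 ∧
    ∃ W₁ W₂ W₃ : Submodule k (Fin 4 → k),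
      W₁ ≠ W₂ ∧ W₁ ≠ W₃ ∧ W₂ ≠ W₃ ∧
      IsLineIn F W₁ ∧ IsLineIn F W₂ ∧ IsLineIn F W₃ ∧
      L ≤ W₁ ∧ L ≤ W₂ ∧ L ≤ W₃


section tri
set_option linter.unusedSectionVars false
variable {k : Type*} [Field k] {V : Type*} [AddCommGroup V] [Module k V]

/-- derivative of the cubic form `T x x x` at `x` along `y` -/
def dT (T : V →ₗ[k] V →ₗ[k] V →ₗ[k] k) (y x : V) : k := T y x x + T x y x + T x x y

/-- the cubic form is nonsingular -/
def NonSing (T : V →ₗ[k] V →ₗ[k] V →ₗ[k] k) : Prop :=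
  ∀ x, T x x x = 0 → (∀ y, dT T y x = 0) → x = 0

lemma coeff_zero [Infinite k] (a b c d : k) (h : ∀ t : k, t ≠ 0 → a + t * b + t^2 * c + t^3 * d = 0) :
    a = 0 ∧ b = 0 ∧ c = 0 ∧ d = 0 := by
  let p : Polynomial k := .C a + .X * .C b + .X^2 * .C c + .X^3 * .C d
  have hp : p = 0 := by
    have : Polynomial.X * p = 0 := by
      apply Polynomial.funext
      intro t
      by_cases ht : t = 0
      · simp [ht]
      · have := h t ht
        simp [p]
        right; linear_combination this
    simpa using this
  have h0 := congrArg (fun q => Polynomial.coeff q 0) hp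
  have h1 := congrArg (fun q => Polynomial.coeff q 1) hp
  have h2 := congrArg (fun q => Polynomial.coeff q 2) hp
  have h3 := congrArg (fun q => Polynomial.coeff q 3) hp
  simp [p, Polynomial.coeff_X, Polynomial.coeff_C, Polynomial.coeff_X_pow] at h0 h1 h2 h3
  exact ⟨h0, h1, h2, h3⟩

lemma exists_quad [IsAlgClosed k] (a b c : k) (ha : a ≠ 0) : ∃ t : k, a * t^2 + b * t + c = 0 := by
  obtain ⟨t, ht⟩ := IsAlgClosed.exists_root (.C a * .X^2 + .C b * .X + .C c : Polynomial k)
    (by rw [Polynomial.degree_quadratic ha]; norm_num)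
  exact ⟨t, by simpa using ht⟩

lemma exists_cubic [IsAlgClosed k] (a b c d : k) (ha : a ≠ 0) :
    ∃ t : k, a * t^3 + b * t^2 + c * t + d = 0 := by
  obtain ⟨t, ht⟩ := IsAlgClosed.exists_root
    (.C a * .X^3 + .C b * .X^2 + .C c * .X + .C d : Polynomial k)
    (by rw [Polynomial.degree_cubic ha]; norm_num)
  exact ⟨t, by simpa using ht⟩

variable (T : V →ₗ[k] V →ₗ[k] V →ₗ[k] k)

lemma cube_add (x y : V) (t : k) : T (x + t • y) (x + t • y) (x + t • y) =
    T x x x + t * dT T y x + t^2 * dT T x y + t^3 * T y y y := by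
  simp only [dT, map_add, map_smul, LinearMap.add_apply, LinearMap.smul_apply, smul_eq_mul]
  ring

/-- full polarization -/
def pT (x y z : V) : k := T x y z + T x z y + T y x z + T y z x + T z x y + T z y x

lemma dT_add (z x y : V) (t : k) : dT T z (x + t • y) =
    dT T z x + t * pT T z x y + t^2 * dT T z y := by
  simp only [dT, pT, map_add, map_smul, LinearMap.add_apply, LinearMap.smul_apply, smul_eq_mul]
  ring

lemma dT_lin (z y x : V) (t : k) : dT T (y + t • z) x = dT T y x + t * dT T z x := by
  simp only [dT, map_add, map_smul, LinearMap.add_apply, LinearMap.smul_apply, smul_eq_mul]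
  ring

lemma dT_smul (y x : V) (t : k) : dT T (t • y) x = t * dT T y x := by
  simp only [dT, map_smul, LinearMap.smul_apply, smul_eq_mul]
  ring

lemma dT_smul' (y x : V) (t : k) : dT T y (t • x) = t^2 * dT T y x := by
  simp only [dT, map_smul, LinearMap.smul_apply, smul_eq_mul]
  ring

lemma pT_self (x y : V) : pT T x x y = 2 * dT T y x := by
  simp only [dT, pT]; ring

lemma pT_self' (x y : V) : pT T x y y = 2 * dT T x y := by
  simp only [dT, pT]; ring

lemma dT_self (x : V) : dT T x x = 3 * T x x x := by
  simp only [dT]; ring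

/-- `dT T · v` as a linear form -/
def dL (v : V) : V →ₗ[k] k where
  toFun y := dT T y v
  map_add' y z := by simpa using dT_lin T z y v 1
  map_smul' t y := by simpa using dT_smul T y v t

@[simp] lemma dL_apply (v y : V) : dL T v y = dT T y v := rfl

lemma tangent [Infinite k] (x y : V) (h : ∀ t : k, T (x + t • y) (x + t • y) (x + t • y) = 0) :
    dT T y x = 0 ∧ dT T x y = 0 := by
  have := coeff_zero (T x x x) (dT T y x) (dT T x y) (T y y y)
    (fun t _ => by rw [← cube_add]; exact h t)
  exact ⟨this.2.1, this.2.2.1⟩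

lemma dec (l : V →ₗ[k] k) (e : V) (he : l e = 1) (y : V) : ∃ h, l h = 0 ∧ y = h + l y • e :=
  ⟨y - l y • e, by simp [he], by simp⟩

lemma exists_e (l : V →ₗ[k] k) (hl : l ≠ 0) : ∃ e, l e = 1 := by
  obtain ⟨x, hx⟩ : ∃ x, l x ≠ 0 := by
    by_contra! h; exact hl (LinearMap.ext h)
  exact ⟨(l x)⁻¹ • x, by simp [hx]⟩

variable [FiniteDimensional k V]

lemma finrank_ker3 (hV : Module.finrank k V = 4) (l : V →ₗ[k] k) (hl : l ≠ 0) : Module.finrank k (LinearMap.ker l) = 3 := by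
  have := LinearMap.finrank_range_add_finrank_ker l
  rw [LinearMap.range_eq_top.2 (LinearMap.surjective hl)] at this
  simp at this; omega

lemma span2_le (v a : V) : Module.finrank k (Submodule.span k {v, a}) ≤ 2 := by
  classical
  have := finrank_span_finset_le_card (R := k) (M := V) ({v, a} : Finset V)
  have h6 := Finset.card_le_two (a := v) (b := a)
  have e : (↑({v, a} : Finset V) : Set V) = {v, a} := by simp
  rw [Set.finrank, e] at this
  omega

lemma span2_lt (v a : V) (hv : v ≠ 0) (ha : a ∉ Submodule.span k {v}) :
    Module.finrank k (Submodule.span k {v, a}) = 2 := by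
  have h1 := finrank_span_singleton (K := k) hv
  have h2 : Submodule.span k {v} < Submodule.span k {v, a} := by
    refine lt_of_le_of_ne (Submodule.span_mono (by simp)) ?_
    intro h; apply ha; rw [h]; exact Submodule.subset_span (by simp)
  have h3 := Submodule.finrank_lt_finrank_of_lt h2
  have h5 := span2_le (k := k) v a
  omega

lemma span3_le (v a b : V) (hv : v ≠ 0) (ha : a ∉ Submodule.span k {v})
    (hb : b ∉ Submodule.span k {v, a}) :
    3 ≤ Module.finrank k (Submodule.span k {v, a, b}) := by
  have h1 := span2_lt v a hv ha
  have h2 : Submodule.span k {v, a} < Submodule.span k {v, a, b} := by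
    refine lt_of_le_of_ne (Submodule.span_mono (by intro x; simp; tauto)) ?_
    intro h; apply hb; rw [h]; exact Submodule.subset_span (by simp)
  have h3 := Submodule.finrank_lt_finrank_of_lt h2
  omega

lemma comb (hV : Module.finrank k V = 4) (l : V →ₗ[k] k) (hl : l ≠ 0) (v a b : V) (hv : v ≠ 0) (ha : a ∉ Submodule.span k {v})
    (hb : b ∉ Submodule.span k {v, a}) (lv : l v = 0) (la : l a = 0) (lb : l b = 0) (h : V)
    (hh : l h = 0) : ∃ r s t : k, h = r • v + s • a + t • b := by
  have h1 := span3_le v a b hv ha hb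
  have h2 := finrank_ker3 hV l hl
  have h3 : Submodule.span k {v, a, b} = LinearMap.ker l := by
    apply Submodule.eq_of_le_of_finrank_le
    · rw [Submodule.span_le]
      rintro x (rfl | rfl | rfl) <;> simpa
    · omega
  have h4 : h ∈ Submodule.span k {v, a, b} := by rw [h3]; simpa
  rw [Submodule.mem_span_triple] at h4
  obtain ⟨r, s, t, h⟩ := h4
  exact ⟨r, s, t, h.symm⟩

lemma exists_ab (hV : Module.finrank k V = 4) (l : V →ₗ[k] k) (hl : l ≠ 0) (v : V) :
    ∃ a b, l a = 0 ∧ l b = 0 ∧ a ∉ Submodule.span k {v} ∧ b ∉ Submodule.span k {v, a} := by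
  have h2 := finrank_ker3 hV l hl
  have key : ∀ S : Submodule k V, Module.finrank k S ≤ 2 → ∃ a, l a = 0 ∧ a ∉ S := by
    intro S hS
    by_contra! h
    have : LinearMap.ker l ≤ S := fun x hx => h x (by simpa using hx)
    have := Submodule.finrank_mono this
    omega
  have h1 : Module.finrank k (Submodule.span k {v}) ≤ 2 := by 
    have := span2_le (k := k) v v
    rwa [Set.pair_eq_singleton] at this
  obtain ⟨a, la, ha⟩ := key _ h1
  have h3 := span2_le (k := k) v a
  obtain ⟨b, lb, hb⟩ := key _ h3
  exact ⟨a, b, la, lb, ha, hb⟩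

lemma no_plane [IsAlgClosed k] (hV : Module.finrank k V = 4) (hs : NonSing T) (l : V →ₗ[k] k) (hl : l ≠ 0)
    (h : ∀ x, l x = 0 → T x x x = 0) : False := by
  have : Infinite k := IsAlgClosed.instInfinite
  obtain ⟨e, he⟩ := exists_e l hl
  have hd : ∀ x y, l x = 0 → l y = 0 → dT T y x = 0 := fun x y hx hy =>
    (tangent T x y (fun t => h _ (by simp [hx, hy]))).1
  have key : ∀ x, l x = 0 → dT T e x = 0 → x = 0 := by
    intro x hx hex
    refine hs x (h x hx) fun y => ?_
    obtain ⟨z, hz, hy⟩ := dec l e he y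
    rw [hy, dT_lin, hd x z hx hz, hex]; simp
  obtain ⟨a, b, la, lb, ha, hb⟩ := exists_ab hV l hl 0
  have ha0 : a ≠ 0 := by rintro rfl; exact ha (zero_mem _)
  have hea : dT T e a ≠ 0 := fun hh => ha0 (key a la hh)
  obtain ⟨t, ht⟩ := exists_quad (dT T e a) (pT T e b a) (dT T e b) hea
  have h0 := key (b + t • a) (by simp [la, lb]) (by rw [dT_add]; linear_combination ht)
  apply hb
  rw [Submodule.mem_span_pair]
  exact ⟨0, -t, by rw [neg_smul, smul_zero, zero_add]; exact (eq_neg_of_add_eq_zero_left h0).symm⟩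


lemma pT_comm (x y z : V) : pT T x y z = pT T y x z := by simp only [pT]; ring

lemma pT_comm' (x y z : V) : pT T x y z = pT T x z y := by simp only [pT]; ring

lemma pT_lin (x y z w : V) (t : k) : pT T x (y + t • z) w = pT T x y w + t * pT T x z w := by
  simp only [pT, map_add, map_smul, LinearMap.add_apply, LinearMap.smul_apply, smul_eq_mul]
  ring

lemma pT_smul (x y w : V) (t : k) : pT T x (t • y) w = t * pT T x y w := by
  simp only [pT, map_smul, LinearMap.smul_apply, smul_eq_mul]
  ring

/-- `pT T x · z` as a linear form -/
def pL (x w : V) : V →ₗ[k] k where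
  toFun y := pT T x y w
  map_add' y z := by simpa using pT_lin T x y z w 1
  map_smul' t y := by simpa using pT_smul T x y w t

@[simp] lemma pL_apply (x w y : V) : pL T x w y = pT T x y w := rfl

lemma cube_smul (x : V) (t : k) : T (t • x) (t • x) (t • x) = t^3 * T x x x := by
  simp only [map_smul, LinearMap.smul_apply, smul_eq_mul]
  ring

lemma dL_ne (hs : NonSing T) (v : V) (hv : v ≠ 0) (Fv : T v v v = 0) : dL T v ≠ 0 := by
  intro h
  exact hv (hs v Fv fun y => by simpa using congrArg (fun f => f y) h)

/-- In characteristic two the polar of an Eckardt point is not identically zero. -/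
lemma char_two_case [IsAlgClosed k] (hV : Module.finrank k V = 4) (hs : NonSing T) (v a b : V)
    (hv : v ≠ 0) (ha : a ∉ Submodule.span k {v}) (hb : b ∉ Submodule.span k {v, a})
    (Fv : T v v v = 0) (Fa : T a a a = 0) (Fb : T b b b = 0) (Fab : T (a + b) (a + b) (a + b) = 0)
    (la : dT T a v = 0) (lb : dT T b v = 0) (h2 : (2 : k) = 0) (hQ : ∀ x, dT T v x = 0) :
    False := by
  have hl := dL_ne T hs v hv Fv
  have lv : dL T v v = 0 := by simp [dT_self, Fv]
  obtain ⟨e, he⟩ := exists_e _ hl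
  have he' : dT T e v = 1 := he
  have hp : ∀ x y, pT T v x y = 0 := fun x y => by
    have := dT_add T v x y 1
    rw [hQ, hQ, hQ] at this
    linear_combination -this
  have hp' : ∀ x y, pT T x y v = 0 := fun x y => by rw [pT_comm', pT_comm]; exact hp _ _
  have hδ : dT T b a + dT T a b = 0 := by
    have := cube_add T a b 1
    rw [one_smul, Fab, Fa, Fb] at this
    linear_combination -this
  have hcomb := comb hV _ hl v a b hv ha hb lv la lb
  by_cases hz : dT T b a = 0
  · have hz' : dT T a b = 0 := by linear_combination hδ - hz
    refine no_plane T hV hs _ hl fun h hh => ?_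
    obtain ⟨r, s, t, rfl⟩ := hcomb h hh
    have : r • v + s • a + t • b = (s • a + t • b) + r • v := by abel
    rw [this, cube_add, hQ, dT_lin, cube_add, cube_smul]
    simp only [dT_smul, dT_smul', Fv, Fa, Fb, la, lb, hz, hz']
    ring
  · obtain ⟨s, hs'⟩ := exists_quad (dT T b a) (pT T b e a) (dT T b e) hz
    obtain ⟨r, hr'⟩ := exists_quad (dT T a b) (pT T a e b) (dT T a e)
      (fun h => hz (by linear_combination hδ - h))
    obtain ⟨t, ht'⟩ := exists_quad 1 0 (dT T e (e + s • a + r • b)) one_ne_zero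
    have hDa : dT T a (e + s • a + r • b + t • v) = 0 := by
      have e1 : pT T a e a = 2 * dT T e a := by rw [pT_comm', pT_self]
      have e2 : pT T a a b = 2 * dT T b a := by rw [pT_self]
      rw [dT_add, hp', dT_add, dT_add, pT_lin, e1, e2, la, dT_self, Fa]
      linear_combination hr' + (s * dT T e a + r * s * dT T b a) * h2
    have hDb : dT T b (e + s • a + r • b + t • v) = 0 := by
      have e1 : pT T b e b = 2 * dT T e b := by rw [pT_comm', pT_self]
      have e2 : pT T b a b = 2 * dT T a b := by rw [pT_comm', pT_self]
      rw [dT_add, hp', dT_add, dT_add, pT_lin, e1, e2, lb, dT_self, Fb]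
      linear_combination hs' + (r * dT T e b + r * s * dT T a b) * h2
    have hDe : dT T e (e + s • a + r • b + t • v) = 0 := by
      rw [dT_add, hp', he']
      linear_combination ht'
    have hD : ∀ y, dT T y (e + s • a + r • b + t • v) = 0 := by
      intro y
      obtain ⟨h, hh, hy⟩ := dec _ e he y
      obtain ⟨r', s', t', rfl⟩ := hcomb h hh
      rw [hy, dT_lin, dT_lin, dT_lin, dT_smul, hDa, hDb, hDe, hQ]
      ring
    have hx := hs _ (by
      have := hD (e + s • a + r • b + t • v)
      rw [dT_self] at this
      linear_combination this - T (e + s • a + r • b + t • v) (e + s • a + r • b + t • v)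
        (e + s • a + r • b + t • v) * h2) hD
    have := congrArg (dL T v) hx
    rw [map_add, map_add, map_add, map_smul, map_smul, map_smul, lv, he, dL_apply, dL_apply, la, lb] at this
    rw [map_zero] at this
    simp at this

lemma fwd0 [IsAlgClosed k] (hV : Module.finrank k V = 4) (hs : NonSing T) (v a b : V)
    (hv : v ≠ 0) (ha : a ∉ Submodule.span k {v}) (hb : b ∉ Submodule.span k {v, a})
    (Fv : T v v v = 0) (Fa : T a a a = 0) (Fb : T b b b = 0) (Fab : T (a + b) (a + b) (a + b) = 0)
    (la : dT T a v = 0) (lb : dT T b v = 0) (Qa : dT T v a = 0) (Qb : dT T v b = 0)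
    (Qab : dT T v (a + b) = 0) :
    ∃ φ : V →ₗ[k] k, φ ≠ 0 ∧ φ v = -2 ∧
      ∀ x, T (x + φ x • v) (x + φ x • v) (x + φ x • v) = T x x x := by
  have hl := dL_ne T hs v hv Fv
  have lv : dL T v v = 0 := by simp [dT_self, Fv]
  obtain ⟨e, he⟩ := exists_e _ hl
  have he' : dT T e v = 1 := he
  have hcomb := comb hV _ hl v a b hv ha hb lv la lb
  have hpab : pT T v a b = 0 := by
    have := dT_add T v a b 1
    rw [one_smul, Qab, Qa, Qb] at this
    linear_combination -this
  have hQH : ∀ h, dT T h v = 0 → dT T v h = 0 := by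
    intro h hh
    obtain ⟨r, s, t, rfl⟩ := hcomb h hh
    have : r • v + s • a + t • b = (s • a + t • b) + r • v := by abel
    have e1 : ∀ x, pT T v x v = 2 * dT T x v := fun x => by rw [pT_comm', pT_self]
    rw [this, dT_add, e1, dT_lin, dT_self, dT_add, pT_smul]
    simp only [dT_smul, dT_smul', Fv, la, lb, Qa, Qb, hpab]
    ring
  let φ : V →ₗ[k] k := -(pL T v e - dT T v e • dL T v)
  have hφ : ∀ x, φ x = -(pT T v x e - dT T v e * dT T x v) := fun x => rfl
  have hφv : φ v = -2 := by
    rw [hφ, pT_self, dT_self, Fv, he']; ring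
  have hQ : ∀ x, dT T v x = -(φ x * dT T x v) := by
    intro x
    obtain ⟨h, hh, hy⟩ := dec _ e he x
    rw [dL_apply] at hh hy
    have e1 : pT T v x e = pT T v h e + dT T x v * (2 * dT T v e) := by
      conv_lhs => rw [hy, pT_lin, pT_self']
    have e2 : dT T v x = dT T v h + dT T x v * pT T v h e + dT T x v ^ 2 * dT T v e := by
      conv_lhs => rw [hy, dT_add]
    rw [hφ, e2, e1, hQH h hh]
    ring
  refine ⟨φ, ?_, hφv, ?_⟩
  · intro h0
    rw [h0] at hφv
    refine char_two_case T hV hs v a b hv ha hb Fv Fa Fb Fab la lb ?_ ?_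
    · simp at hφv; exact hφv
    · intro x; rw [hQ, h0]; simp
  · intro x
    rw [cube_add, hQ, Fv]; ring

lemma mem_pair_iff {v a x : V} : x ∈ Submodule.span k {v, a} ↔ ∃ s t : k, s • v + t • a = x :=
  Submodule.mem_span_pair

lemma fwd [IsAlgClosed k] (hV : Module.finrank k V = 4) (hs : NonSing T) (v a b c : V)
    (hv : v ≠ 0) (ha : a ∉ Submodule.span k {v}) (hb : b ∉ Submodule.span k {v, a})
    (hca : c ∉ Submodule.span k {v, a}) (hcb : c ∉ Submodule.span k {v, b})
    (Za : ∀ x ∈ Submodule.span k {v, a}, T x x x = 0)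
    (Zb : ∀ x ∈ Submodule.span k {v, b}, T x x x = 0)
    (Zc : ∀ x ∈ Submodule.span k {v, c}, T x x x = 0) :
    ∃ φ : V →ₗ[k] k, φ ≠ 0 ∧ φ v = -2 ∧
      ∀ x, T (x + φ x • v) (x + φ x • v) (x + φ x • v) = T x x x := by
  have : Infinite k := IsAlgClosed.instInfinite
  have key : ∀ d, (∀ x ∈ Submodule.span k {v, d}, T x x x = 0) → ∀ x ∈ Submodule.span k {v, d},
      T x x x = 0 ∧ dT T x v = 0 ∧ dT T v x = 0 := by
    intro d hd x hx
    have := tangent T x v (fun t => hd _ (add_mem hx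
      (Submodule.smul_mem _ _ (Submodule.subset_span (by simp)))))
    exact ⟨hd x hx, this.2, this.1⟩
  have Fv : T v v v = 0 := Za v (Submodule.subset_span (by simp))
  have hl := dL_ne T hs v hv Fv
  have lv : dL T v v = 0 := by simp [dT_self, Fv]
  obtain ⟨r, s, t, hc⟩ := comb hV _ hl v a b hv ha hb lv
    (key a Za a (Submodule.subset_span (by simp))).2.1
    (key b Zb b (Submodule.subset_span (by simp))).2.1 c
    (key c Zc c (Submodule.subset_span (by simp))).2.1
  have hs0 : s ≠ 0 := by
    rintro rfl
    exact hcb (mem_pair_iff.2 ⟨r, t, by rw [hc]; simp⟩)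
  have ht0 : t ≠ 0 := by
    rintro rfl
    exact hca (mem_pair_iff.2 ⟨r, s, by rw [hc]; simp⟩)
  obtain ⟨Fa, la, Qa⟩ := key a Za (s • a) (mem_pair_iff.2 ⟨0, s, by simp⟩)
  obtain ⟨Fb, lb, Qb⟩ := key b Zb (t • b) (mem_pair_iff.2 ⟨0, t, by simp⟩)
  obtain ⟨Fc, -, Qc⟩ := key c Zc (s • a + t • b) (mem_pair_iff.2 ⟨-r, 1, by
    rw [hc]; module⟩)
  refine fwd0 T hV hs v (s • a) (t • b) hv ?_ ?_ Fv Fa Fb Fc la lb Qa Qb Qc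
  · rwa [Submodule.smul_mem_iff _ hs0]
  · rw [Submodule.smul_mem_iff _ ht0]
    intro h
    obtain ⟨p, q, h⟩ := mem_pair_iff.1 h
    exact hb (mem_pair_iff.2 ⟨p, q * s, by rw [← h, smul_smul]⟩)

lemma bwd_lam [IsAlgClosed k] (hV : Module.finrank k V = 4) (hs : NonSing T) (v : V)
    (φ : V →ₗ[k] k) (hφ : φ ≠ 0) (lam : k)
    (hT : ∀ x, T (x + φ x • v) (x + φ x • v) (x + φ x • v) = lam * T x x x) : lam = 1 := by
  by_contra hne
  refine no_plane T hV hs φ hφ fun x hx => ?_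
  have := hT x
  rw [hx] at this
  simp only [zero_smul, add_zero] at this
  have h2 : (1 - lam) * T x x x = 0 := by linear_combination this
  rcases mul_eq_zero.1 h2 with h | h
  · exact absurd (by linear_combination -h) hne
  · exact h

lemma bwd_sing [IsAlgClosed k] (hs : NonSing T) (v : V) (φ : V →ₗ[k] k)
    (hl : dL T v ≠ 0) (Fv : T v v v = 0) (hQ : ∀ x, dT T v x = -(φ x * dT T x v))
    (x : V) (hx : x ∉ Submodule.span k {v}) (lx : dT T x v = 0) (Fx : T x x x = 0)
    (hD : ∀ y, dT T y v = 0 → dT T y x = 0) : False := by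
  obtain ⟨e, he⟩ := exists_e _ hl
  have he' : dT T e v = 1 := he
  have hp : ∀ y, pT T y x v = -(φ x * dT T y v) := by
    intro y
    have h1 := dT_add T v x y 1
    have h2 := dT_lin T y x v 1
    rw [hQ, hQ, hQ, h2, map_add, map_smul, smul_eq_mul, lx] at h1
    have h3 : pT T y x v = pT T v x y := by simp only [pT]; ring
    rw [h3]
    linear_combination -h1
  obtain ⟨t, ht⟩ := exists_quad 1 (-φ x) (dT T e x) one_ne_zero
  have h0 := hs (x + t • v) (by
    rw [cube_add, Fx, hQ, lx, Fv]; ring) (fun y => by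
    obtain ⟨h, hh, hy⟩ := dec _ e he y
    rw [dL_apply] at hh
    rw [hy, dT_lin, dT_add, dT_add, hp, hp, hh, he', hD h hh]
    linear_combination (dL T v y) * ht)
  apply hx
  rw [Submodule.mem_span_singleton]
  exact ⟨-t, by rw [neg_smul]; exact (eq_neg_of_add_eq_zero_left h0).symm⟩

lemma bwd [IsAlgClosed k] (hV : Module.finrank k V = 4) (hs : NonSing T) (v : V) (hv : v ≠ 0)
    (φ : V →ₗ[k] k) (hφ : φ ≠ 0) (hφv : φ v = -2) (lam : k)
    (hT : ∀ x, T (x + φ x • v) (x + φ x • v) (x + φ x • v) = lam * T x x x) :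
    ∃ a b c, a ∉ Submodule.span k {v} ∧ b ∉ Submodule.span k {v, a} ∧
      c ∉ Submodule.span k {v, a} ∧ c ∉ Submodule.span k {v, b} ∧
      (∀ x ∈ Submodule.span k {v, a}, T x x x = 0) ∧
      (∀ x ∈ Submodule.span k {v, b}, T x x x = 0) ∧
      (∀ x ∈ Submodule.span k {v, c}, T x x x = 0) := by
  have : Infinite k := IsAlgClosed.instInfinite
  obtain rfl := bwd_lam T hV hs v φ hφ lam hT
  have hP1 : ∀ x, φ x ≠ 0 → dT T v x + φ x * dT T x v + φ x ^ 2 * T v v v = 0 := by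
    intro x hx
    have := hT x
    rw [cube_add] at this
    have h : φ x * (dT T v x + φ x * dT T x v + φ x ^ 2 * T v v v) = 0 := by
      linear_combination this
    exact (mul_eq_zero.1 h).resolve_left hx
  obtain ⟨f, hf⟩ := exists_e φ hφ
  have hP : ∀ x, dT T v x + φ x * dT T x v + φ x ^ 2 * T v v v = 0 := by
    intro x
    by_cases hx : φ x = 0
    · have := coeff_zero (dT T v x) (pT T v x f + dT T x v)
        (dT T v f + dT T f v + T v v v) 0 (fun t ht => by
          have := hP1 (x + t • f) (by simp [hx, hf, ht])
          rw [dT_add, dT_lin, map_add, map_smul, hx, hf, smul_eq_mul] at this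
          linear_combination this)
      rw [this.1, hx]; ring
    · exact hP1 x hx
  have Fv : T v v v = 0 := by
    have := hP v
    rw [dT_self, hφv] at this
    linear_combination this
  have hQ : ∀ x, dT T v x = -(φ x * dT T x v) := fun x => by
    linear_combination hP x - φ x ^ 2 * Fv
  have hl := dL_ne T hs v hv Fv
  have lv : dL T v v = 0 := by simp [dT_self, Fv]
  have lv' : dT T v v = 0 := lv
  have Z : ∀ a, T a a a = 0 → dT T a v = 0 → ∀ x ∈ Submodule.span k {v, a}, T x x x = 0 := by
    intro a Fa la x hx
    obtain ⟨s, t, rfl⟩ := mem_pair_iff.1 hx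
    rw [cube_add, cube_smul, dT_smul', dT_smul, hQ, Fa, la, Fv]; ring
  -- a zero of the binary cubic
  obtain ⟨a, b, la, lb, ha, hb, Fa⟩ : ∃ a b, dT T a v = 0 ∧ dT T b v = 0 ∧
      a ∉ Submodule.span k {v} ∧ b ∉ Submodule.span k {v, a} ∧ T a a a = 0 := by
    obtain ⟨a, b, la, lb, ha, hb⟩ := exists_ab hV _ hl v
    rw [dL_apply] at la lb
    by_cases Fa : T a a a = 0
    · exact ⟨a, b, la, lb, ha, hb, Fa⟩
    · obtain ⟨t, ht⟩ := exists_cubic (T a a a) (dT T b a) (dT T a b) (T b b b) Fa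
      refine ⟨b + t • a, a, by rw [dT_lin, la, lb]; ring, la, ?_, ?_,
        by rw [cube_add]; linear_combination ht⟩
      · intro h
        obtain ⟨s, h⟩ := Submodule.mem_span_singleton.1 h
        exact hb (mem_pair_iff.2 ⟨s, -t, by rw [h]; module⟩)
      · intro h
        obtain ⟨p, q, h⟩ := mem_pair_iff.1 h
        by_cases hq : q = 0
        · subst hq
          exact ha (Submodule.mem_span_singleton.2 ⟨p, by rw [← h]; simp⟩)
        · refine hb (mem_pair_iff.2 ⟨-q⁻¹ * p, q⁻¹ * (1 - q * t), ?_⟩)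
          have e1 : (1 - q * t) • a = p • v + q • b := by
            rw [sub_smul, one_smul]
            nth_rw 1 [← h]
            module
          rw [mul_smul q⁻¹, e1, smul_add, smul_smul, smul_smul, inv_mul_cancel₀ hq]
          module
  have hcomb := comb hV _ hl v a b hv ha hb lv la lb
  have hDx : ∀ x, dT T x v = 0 → dT T a x = 0 → dT T b x = 0 → ∀ y, dT T y v = 0 → dT T y x = 0 := by
    intro x lx hax hbx y ly
    obtain ⟨r, s, t, rfl⟩ := hcomb y ly
    rw [dT_lin, dT_lin, dT_smul, hax, hbx, hQ, lx]; ring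
  have hba : dT T b a ≠ 0 := by
    intro h
    exact bwd_sing T hs v φ hl Fv hQ a ha la Fa (hDx a la (by rw [dT_self, Fa]; ring) h)
  obtain ⟨s, hs1⟩ := exists_quad (dT T b a) (dT T a b) (T b b b) hba
  have hns : ∀ s : k, b + s • a ∉ Submodule.span k {v, a} := by
    intro s h
    obtain ⟨p, q, h⟩ := mem_pair_iff.1 h
    exact hb (mem_pair_iff.2 ⟨p, q - s, by rw [sub_smul, ← add_sub_assoc, h]; simp⟩)
  have hlx : ∀ s : k, dT T (b + s • a) v = 0 := fun s => by rw [dT_lin, la, lb]; ring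
  have hFx : ∀ s : k, dT T b a * s^2 + dT T a b * s + T b b b = 0 →
      T (b + s • a) (b + s • a) (b + s • a) = 0 := fun s h => by
    rw [cube_add, Fa]; linear_combination h
  obtain ⟨s', hs'⟩ : ∃ s', dT T b a * (s' + s) + dT T a b = 0 :=
    ⟨-s - dT T a b / dT T b a, by field_simp; ring⟩
  have hs2 : dT T b a * s'^2 + dT T a b * s' + T b b b = 0 := by
    linear_combination hs1 + (s' - s) * hs'
  have hne : s' ≠ s := by
    rintro rfl
    refine bwd_sing T hs v φ hl Fv hQ (b + s' • a) ?_ (hlx s') (hFx s' hs1)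
      (hDx _ (hlx s') ?_ ?_)
    · intro h
      exact hns s' (Submodule.span_mono (by simp) h)
    · have e1 : pT T a b a = 2 * dT T b a := by rw [pT_comm', pT_self]
      rw [dT_add, e1, dT_self, Fa]; linear_combination hs'
    · rw [dT_add, pT_self, dT_self]
      linear_combination 3 * hs1 - s' * hs'
  refine ⟨a, b + s • a, b + s' • a, ha, hns s, hns s', ?_, Z a Fa la, Z _ (hFx s hs1) (hlx s),
    Z _ (hFx s' hs2) (hlx s')⟩
  intro h
  obtain ⟨p, q, h⟩ := mem_pair_iff.1 h
  have h1 : p • v + (q * s - s') • a = (1 - q) • b := by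
    have : p • v + (q * s - s') • a = (p • v + q • (b + s • a)) - s' • a - q • b := by module
    rw [this, h]; module
  have hq : q = 1 := by
    by_contra hq
    have hq' : 1 - q ≠ 0 := fun h => hq (by linear_combination -h)
    rw [← Submodule.smul_mem_iff _ hq', ← h1] at hb
    exact hb (mem_pair_iff.2 ⟨_, _, rfl⟩)
  subst hq
  have hss : s' - s ≠ 0 := sub_ne_zero.2 hne
  apply ha
  rw [← Submodule.smul_mem_iff _ hss]
  refine Submodule.mem_span_singleton.2 ⟨p, ?_⟩
  have : p • v = (p • v + (1 * s - s') • a) + (s' - s) • a := by module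
  rw [this, h1]; module

end tri

section final
variable {k : Type*} [Field k]

lemma degree_succ {σ : Type*} (d : σ →₀ ℕ) (n : ℕ) (h : d.degree = n + 1) :
    ∃ a d', d = Finsupp.single a 1 + d' ∧ d'.degree = n := by
  have hd : d ≠ 0 := by rintro rfl; simp at h
  obtain ⟨a, ha⟩ := Finsupp.support_nonempty_iff.2 hd
  have hle : Finsupp.single a 1 ≤ d := by
    rw [Finsupp.single_le_iff]
    exact Nat.one_le_iff_ne_zero.2 (Finsupp.mem_support_iff.1 ha)
  have he : d = Finsupp.single a 1 + (d - Finsupp.single a 1) := (add_tsub_cancel_of_le hle).symm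
  refine ⟨a, d - Finsupp.single a 1, he, ?_⟩
  rw [he, map_add, Finsupp.degree_single] at h
  omega

/-- `F` is the restriction to the diagonal of a trilinear form `T`. -/
def CubicRep (F : MvPolynomial (Fin 4) k)
    (T : (Fin 4 → k) →ₗ[k] (Fin 4 → k) →ₗ[k] (Fin 4 → k) →ₗ[k] k) : Prop :=
  (∀ x, eval x F = T x x x) ∧ ∀ x y, ∑ i, y i * eval x (pderiv i F) = dT T y x

lemma rep_mono (d : Fin 4 →₀ ℕ) (hd : d.degree = 3) (c : k) : ∃ T, CubicRep (monomial d c) T := by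
  obtain ⟨a, d1, rfl, h1⟩ := degree_succ d 2 hd
  obtain ⟨b, d2, rfl, h2⟩ := degree_succ d1 1 h1
  obtain ⟨e, d3, rfl, h3⟩ := degree_succ d2 0 h2
  obtain rfl : d3 = 0 := (Finsupp.degree_eq_zero_iff d3).1 h3
  have hm : (monomial (Finsupp.single a 1 + (Finsupp.single b 1 + (Finsupp.single e 1 + 0))) c :
      MvPolynomial (Fin 4) k) = C c * (X a * (X b * X e)) := by
    simp only [X, C_apply, monomial_mul]
    simp
  rw [hm]
  refine ⟨(LinearMap.proj a).smulRight ((LinearMap.proj b).smulRight (c • LinearMap.proj e)), ?_, ?_⟩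
  · intro x; simp; ring
  · intro x y
    simp only [dT, Derivation.leibniz, pderiv_X, pderiv_C, smul_eq_mul, mul_zero, add_zero, map_add,
      map_mul, eval_C, eval_X, mul_add, Finset.sum_add_distrib]
    simp [Pi.single_apply, Finset.sum_add_distrib, mul_add]
    ring

lemma exists_rep (F : MvPolynomial (Fin 4) k) (hF : F.IsHomogeneous 3) : ∃ T, CubicRep F T := by
  rw [F.as_sum]
  apply Finset.sum_induction _ (fun P => ∃ T, CubicRep P T)
  · rintro P Q ⟨T, hT⟩ ⟨S, hS⟩
    refine ⟨T + S, fun x => by simp [hT.1, hS.1], fun x y => ?_⟩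
    simp only [map_add, mul_add, Finset.sum_add_distrib, hT.2, hS.2, dT, LinearMap.add_apply]
    ring
  · exact ⟨0, by simp, by simp [dT]⟩
  · intro d hd
    apply rep_mono
    have := hF (mem_support_iff.1 hd)
    rwa [Finsupp.degree_eq_weight_one]

lemma eval_subst (A : Matrix (Fin 4) (Fin 4) k) (F : MvPolynomial (Fin 4) k) (x : Fin 4 → k) :
    eval x (substMatrix A F) = eval (A *ᵥ x) F := by
  unfold substMatrix
  have : (eval x).comp (aeval (R := k) (fun i => ∑ j, C (A i j) * X j : Fin 4 → MvPolynomial (Fin 4) k)).toRingHom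
      = eval (A *ᵥ x) := by
    apply MvPolynomial.ringHom_ext
    · intro r; simp
    · intro i; simp [Matrix.mulVec, dotProduct]
  exact congrArg (fun f => f F) this

lemma leaves_iff [Infinite k] (A : Matrix (Fin 4) (Fin 4) k) (F : MvPolynomial (Fin 4) k) :
    LeavesInvariant A F ↔ ∃ lam : kˣ, ∀ x, eval (A *ᵥ x) F = (lam : k) * eval x F := by
  refine exists_congr fun lam => ⟨fun h x => ?_, fun h => ?_⟩
  · rw [← eval_subst, h, smul_eval]
  · apply MvPolynomial.funext
    intro x
    rw [eval_subst, h, smul_eval]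

end final

/-- A point of `ℙ³(k)` is an Eckardt point of a smooth cubic
surface `V(F)` if and only if it is the center of a reflection leaving `V(F)`
invariant. -/
theorem stmt1 {k : Type*} [Field k] [IsAlgClosed k]
    (F : MvPolynomial (Fin 4) k) (hF0 : F ≠ 0) (hhom : F.IsHomogeneous 3)
    (hsmooth : ∀ x : Fin 4 → k,
      eval x F = 0 → (∀ i, eval x (pderiv i F) = 0) → x = 0)
    (L : Submodule k (Fin 4 → k)) (hL : Module.finrank k L = 1) :
    IsEckardtPoint F L ↔
      ∃ A : Matrix (Fin 4) (Fin 4) k,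
        A * A = 1 ∧ (A - 1).rank = 1 ∧ LeavesInvariant A F ∧
        LinearMap.range (A - 1).mulVecLin = L := by
  
  have : Infinite k := IsAlgClosed.instInfinite
  obtain ⟨T, hT, hdT⟩ := exists_rep F hhom
  have hs : NonSing T := by
    intro x h1 h2
    refine hsmooth x (by rw [hT, h1]) fun i => ?_
    have := hdT x (Pi.single i 1)
    rw [h2] at this
    simpa [Pi.single_apply] using this
  have hV : Module.finrank k (Fin 4 → k) = 4 := by simp
  obtain ⟨v, hv, rfl⟩ : ∃ v : Fin 4 → k, v ≠ 0 ∧ L = Submodule.span k {v} := by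
    obtain ⟨v, hvL, hv⟩ := (Submodule.ne_bot_iff L).1 (by rintro rfl; simp at hL)
    refine ⟨v, hv, (Submodule.eq_of_le_of_finrank_eq ?_ ?_).symm⟩
    · rwa [Submodule.span_singleton_le_iff_mem]
    · rw [finrank_span_singleton hv, hL]
  have hspan : ∀ (W : Submodule k (Fin 4 → k)) (a : Fin 4 → k), Module.finrank k W = 2 →
      Submodule.span k {v} ≤ W → a ∈ W → a ∉ Submodule.span k {v} →
      Submodule.span k {v, a} = W := by
    intro W a hW hvW haW ha
    refine Submodule.eq_of_le_of_finrank_eq ?_ ?_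
    · rw [Submodule.span_le]
      rintro x (rfl | rfl)
      · exact hvW (Submodule.mem_span_singleton_self _)
      · exact haW
    · rw [span2_lt v a hv ha, hW]
  have hex : ∀ (W : Submodule k (Fin 4 → k)), Module.finrank k W = 2 →
      Submodule.span k {v} ≤ W →
      ∃ a, a ∉ Submodule.span k {v} ∧ W = Submodule.span k {v, a} := by
    intro W hW hvW
    obtain ⟨a, haW, ha⟩ : ∃ a ∈ W, a ∉ Submodule.span k {v} := by
      by_contra! h
      have := Submodule.finrank_mono (show W ≤ Submodule.span k {v} from h)
      omega
    exact ⟨a, ha, (hspan W a hW hvW haW ha).symm⟩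
  have hle : ∀ a : Fin 4 → k, Submodule.span k {v} ≤ Submodule.span k {v, a} :=
    fun a => Submodule.span_mono (by simp)
  have hmem : ∀ a : Fin 4 → k, a ∈ Submodule.span k {v, a} :=
    fun a => Submodule.subset_span (by simp)
  constructor
  · rintro ⟨-, W₁, W₂, W₃, h12, h13, h23, ⟨d1, Z1⟩, ⟨d2, Z2⟩, ⟨d3, Z3⟩, l1, l2, l3⟩
    obtain ⟨a, ha, rfl⟩ := hex W₁ d1 l1
    obtain ⟨b, hb, rfl⟩ := hex W₂ d2 l2
    obtain ⟨c, hc, rfl⟩ := hex W₃ d3 l3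
    obtain ⟨φ, hφ, hφv, hinv⟩ := fwd T hV hs v a b c hv ha
      (fun h => h12 (hspan _ b d1 l1 h hb).symm) (fun h => h13 (hspan _ c d1 l1 h hc).symm)
      (fun h => h23 (hspan _ c d2 l2 h hc).symm)
      (fun x hx => by rw [← hT]; exact Z1 x hx) (fun x hx => by rw [← hT]; exact Z2 x hx)
      (fun x hx => by rw [← hT]; exact Z3 x hx)
    have hA : ∀ x, LinearMap.toMatrix' (LinearMap.id + φ.smulRight v) *ᵥ x = x + φ x • v := by
      intro x
      rw [LinearMap.toMatrix'_mulVec]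
      simp
    have hN : (LinearMap.toMatrix' (LinearMap.id + φ.smulRight v) - 1).mulVecLin =
        φ.smulRight v := by
      apply LinearMap.ext
      intro x
      rw [Matrix.mulVecLin_apply, Matrix.sub_mulVec, hA]
      simp
    have hR : LinearMap.range (φ.smulRight v) = Submodule.span k {v} := by
      ext x
      rw [Submodule.mem_span_singleton]
      constructor
      · rintro ⟨y, rfl⟩
        exact ⟨φ y, by simp⟩
      · rintro ⟨r, rfl⟩
        obtain ⟨f, hf⟩ := exists_e φ hφ
        exact ⟨r • f, by simp [hf]⟩
    refine ⟨LinearMap.toMatrix' (LinearMap.id + φ.smulRight v), ?_, ?_, ?_, ?_⟩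
    · apply Matrix.mulVec_injective
      funext x
      rw [← Matrix.mulVec_mulVec, hA, hA, Matrix.one_mulVec]
      simp only [map_add, map_smul, hφv, smul_eq_mul]
      module
    · rw [Matrix.rank, hN, hR, hL]
    · rw [leaves_iff]
      refine ⟨1, fun x => ?_⟩
      rw [hA, hT, hT, hinv]; simp
    · rw [hN, hR]
  · rintro ⟨A, hAA, -, hinv, hR⟩
    obtain ⟨lam, hinv⟩ := (leaves_iff A F).1 hinv
    have hφ' : ∀ x, ∃ r : k, (A - 1) *ᵥ x = r • v := by
      intro x
      have : (A - 1) *ᵥ x ∈ Submodule.span k {v} := by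
        rw [← hR]; exact ⟨x, rfl⟩
      obtain ⟨r, hr⟩ := Submodule.mem_span_singleton.1 this
      exact ⟨r, hr.symm⟩
    choose φ0 hφ0 using hφ'
    have hinj : ∀ r s : k, r • v = s • v → r = s := fun r s h => smul_left_injective k hv h
    let φ : (Fin 4 → k) →ₗ[k] k :=
      { toFun := φ0
        map_add' := fun x y => hinj _ _ (by
          rw [add_smul, ← hφ0, ← hφ0, ← hφ0, Matrix.mulVec_add])
        map_smul' := fun t x => hinj _ _ (by
          rw [RingHom.id_apply, smul_eq_mul, mul_smul, ← hφ0, ← hφ0, Matrix.mulVec_smul]) }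
    have hφ : ∀ x, (A - 1) *ᵥ x = φ x • v := hφ0
    have hA : ∀ x, A *ᵥ x = x + φ x • v := by
      intro x
      rw [← hφ, Matrix.sub_mulVec, Matrix.one_mulVec]; abel
    obtain ⟨f, hf⟩ : ∃ f, φ f = 1 := by
      have : v ∈ LinearMap.range (A - 1).mulVecLin := by
        rw [hR]; exact Submodule.mem_span_singleton_self v
      obtain ⟨f, hf⟩ := this
      refine ⟨f, hinj _ _ ?_⟩
      rw [← hφ, one_smul]; exact hf
    have hφv : φ v = -2 := by
      have h1 : A *ᵥ (A *ᵥ f) = f := by rw [Matrix.mulVec_mulVec, hAA, Matrix.one_mulVec]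
      rw [hA, hA, map_add, map_smul, hf] at h1
      refine hinj _ _ ?_
      have h2 : (2 + φ v) • v = 0 := by
        have h3 : (2 + φ v) • v = (f + (1 : k) • v + (1 + (1 : k) • φ v) • v) - f := by
          rw [one_smul k (φ v)]; module
        rw [h3, h1, sub_self]
      rw [add_smul] at h2
      rw [neg_smul]
      exact eq_neg_of_add_eq_zero_right h2
    obtain ⟨a, b, c, ha, hb, hca, hcb, Za, Zb, Zc⟩ := bwd T hV hs v hv φ
      (by rintro h; rw [h] at hf; simp at hf) hφv lam (fun x => by
        rw [← hT, ← hT, ← hA, hinv])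
    have hb' : b ∉ Submodule.span k {v} := fun h => hb (hle a h)
    have hc' : c ∉ Submodule.span k {v} := fun h => hca (hle a h)
    refine ⟨hL, Submodule.span k {v, a}, Submodule.span k {v, b}, Submodule.span k {v, c},
      fun h => hb (h ▸ hmem b), fun h => hca (h ▸ hmem c), fun h => hcb (h ▸ hmem c),
      ⟨span2_lt v a hv ha, fun x hx => by rw [hT]; exact Za x hx⟩,
      ⟨span2_lt v b hv hb', fun x hx => by rw [hT]; exact Zb x hx⟩,
      ⟨span2_lt v c hv hc', fun x hx => by rw [hT]; exact Zc x hx⟩, hle a, hle b, hle c⟩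
end
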